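/- Let (Σ, ḡ, π̄) be an asymptotically flat initial data set and assume there exists r₁ > r₀ such that (ḡ, π̄) is analytic on Σ ∩ {r₀ ≤ r < r₁} (analytic in {r₀ < r < r₁} and on the sphere {r = r₀}). If a pair (f, X) of a scalar function and a vector field satisfies DΦ[ḡ,π̄]*(f,X) = 0 on a neighborhood of ∂Σ in Σ, then f, X, ∂_ν f and D_ν X are analytic on ∂Σ, where ν is the inward unit normal of ∂Σ for ḡ and D its Levi-Civita connection. -/

import Mathlib

noncomputable section

open MeasureTheory Finset

/-! ## Basic geometry on the exterior region of `ℝ³` -/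

abbrev Vec : Type := Fin 3 → ℝ
abbrev Mtx : Type := Fin 3 → Fin 3 → ℝ

/-- Coordinate partial derivative. -/
def pd (i : Fin 3) (f : Vec → ℝ) (x : Vec) : ℝ := fderiv ℝ f x (Pi.single i 1)

/-- Euclidean radius `r`. -/
def rad (x : Vec) : ℝ := Real.sqrt (x 0 ^ 2 + x 1 ^ 2 + x 2 ^ 2)

/-- The manifold `Σ = {r ≥ r₀}`. -/
def Sig (r₀ : ℝ) : Set Vec := {x | r₀ ≤ rad x}

/-- Its boundary `∂Σ = {r = r₀}`. -/
def bdry (r₀ : ℝ) : Set Vec := {x | rad x = r₀}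

/-- The identity (Euclidean) matrix. -/
def idMtx : Mtx := fun i j => if i = j then 1 else 0

/-- Inverse matrix. -/
def minv (A : Mtx) : Mtx := fun i j => (Matrix.of A)⁻¹ i j

/-- Volume density `√(det g)`. -/
def dens (g : Vec → Mtx) (x : Vec) : ℝ := Real.sqrt (Matrix.det (Matrix.of (g x)))

/-- Asymptotically flat initial data set on `Σ = {r ≥ r₀}` (Definition 2.1). -/
structure AFData (r₀ : ℝ) : Type where
  g : Vec → Mtx
  pi : Vec → Mtx
  g_smooth : ContDiff ℝ (⊤ : ℕ∞) g
  pi_smooth : ContDiff ℝ (⊤ : ℕ∞) pi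
  g_symm : ∀ x i j, g x i j = g x j i
  pi_symm : ∀ x i j, pi x i j = pi x j i
  g_posdef : ∀ x ∈ Sig r₀, (Matrix.of (g x)).PosDef
  decay : ∀ k : ℕ, ∃ C : ℝ, ∀ x ∈ Sig r₀,
      rad x ^ (k + 1) * ‖iteratedFDeriv ℝ k (fun y => g y - idMtx) x‖
        + rad x ^ (k + 2) * ‖iteratedFDeriv ℝ k pi x‖ ≤ C

/-! ## Curvature and constraint operators, in coordinates -/

/-- Christoffel symbols `Γ^k_{ij}` of `g`. -/
def Gam (g : Vec → Mtx) (k i j : Fin 3) (x : Vec) : ℝ :=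
  (1 / 2) * ∑ l, minv (g x) k l *
    (pd i (fun y => g y l j) x + pd j (fun y => g y l i) x - pd l (fun y => g y i j) x)

/-- Ricci curvature `Ric(g)_{ij}`. -/
def RicT (g : Vec → Mtx) (i j : Fin 3) (x : Vec) : ℝ :=
  (∑ k, pd k (fun y => Gam g k i j y) x) - (∑ k, pd j (fun y => Gam g k k i y) x)
    + ∑ k, ∑ l, (Gam g k k l x * Gam g l i j x - Gam g k j l x * Gam g l k i x)

/-- Scalar curvature `R(g)`. -/
def scalR (g : Vec → Mtx) (x : Vec) : ℝ := ∑ i, ∑ j, minv (g x) i j * RicT g i j x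

/-- Trace `tr_g T` of a 2-tensor. -/
def trT (g T : Vec → Mtx) (x : Vec) : ℝ := ∑ i, ∑ j, minv (g x) i j * T x i j

/-- `|T|²_g`. -/
def normSqT (g T : Vec → Mtx) (x : Vec) : ℝ :=
  ∑ i, ∑ j, ∑ k, ∑ l, minv (g x) i k * minv (g x) j l * T x i j * T x k l

/-- Covariant derivative `D_k T_{ij}` of a 2-tensor. -/
def covD (g T : Vec → Mtx) (k i j : Fin 3) (x : Vec) : ℝ :=
  pd k (fun y => T y i j) x - ∑ l, (Gam g l k i x * T x l j + Gam g l k j x * T x i l)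

/-- Divergence `(div_g T)_i = g^{kl} D_k T_{li}`. -/
def divT (g T : Vec → Mtx) (i : Fin 3) (x : Vec) : ℝ :=
  ∑ k, ∑ l, minv (g x) k l * covD g T k l i x

/-- Hamiltonian constraint `H(g,π) = R(g) + ½ (tr_g π)² - |π|²_g`. -/
def Hc (g p : Vec → Mtx) (x : Vec) : ℝ := scalR g x + (1 / 2) * (trT g p x) ^ 2 - normSqT g p x

/-- The vacuum constraint equations on `Σ`. -/
def VacuumConstraints (g p : Vec → Mtx) (r₀ : ℝ) : Prop :=
  ∀ x ∈ Sig r₀, Hc g p x = 0 ∧ ∀ i, divT g p i x = 0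

/-- Lie derivative `(ℒ_X g)_{ij}`. -/
def lieG (g : Vec → Mtx) (X : Vec → Vec) (x : Vec) : Mtx := fun i j =>
  ∑ k, (X x k * pd k (fun y => g y i j) x
    + g x k j * pd i (fun y => X y k) x + g x i k * pd j (fun y => X y k) x)

/-- Divergence of a vector field, `div_g X = D_i X^i`. -/
def divX (g : Vec → Mtx) (X : Vec → Vec) (x : Vec) : ℝ :=
  (∑ i, pd i (fun y => X y i) x) + ∑ i, ∑ k, Gam g i i k x * X x k

/-- Modified Lie derivative `L_g X = ℒ_X g - (div_g X) g`. -/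
def Lmod (g : Vec → Mtx) (X : Vec → Vec) (x : Vec) : Mtx := fun i j =>
  lieG g X x i j - divX g X x * g x i j

/-- Laplace–Beltrami operator on scalars. -/
def lapl (g : Vec → Mtx) (u : Vec → ℝ) (x : Vec) : ℝ :=
  ∑ i, ∑ j, minv (g x) i j * (pd i (fun y => pd j u y) x - ∑ k, Gam g k i j x * pd k u x)

/-- Raising both indices of a 2-tensor: `T^{ij}`. -/
def raise2 (g T : Vec → Mtx) (x : Vec) (i j : Fin 3) : ℝ :=
  ∑ a, ∑ b, minv (g x) i a * minv (g x) j b * T x a b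

/-! ## The elliptic operator `P`, its formal adjoint and boundary operators -/

/-- Pairs `𝕌 = (u, X)` of a scalar function and a vector field. -/
abbrev PairF : Type := (Vec → ℝ) × (Vec → Vec)

/-- The operator `P` of (4.1). -/
def Pop (g p : Vec → Mtx) (U : PairF) : PairF :=
  (fun x => -8 * lapl g U.1 x - 2 * (∑ i, ∑ j, raise2 g p x i j * lieG g U.2 x i j)
      + trT g p x * divX g U.2 x,
   fun x i => -2 * divT g (Lmod g U.2) i x
      - 8 * (∑ j, ∑ l, minv (g x) j l * p x i l * pd j U.1 x)
      + 4 * trT g p x * pd i U.1 x)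

/-- The operator `P^*`. -/
def PopStar (g p : Vec → Mtx) (U : PairF) : PairF :=
  (fun x => -8 * lapl g U.1 x + 4 * (∑ i, ∑ j, raise2 g p x i j * lieG g U.2 x i j)
      - 4 * divX g (fun y k => trT g p y * U.2 y k) x,
   fun x i => -2 * divT g (Lmod g U.2) i x
      + 4 * (∑ j, ∑ l, minv (g x) j l * p x i l * pd j U.1 x)
      - pd i (fun y => trT g p y * U.1 y) x)

/-- The inward (with respect to `Σ`) unit normal `ν` of `∂Σ` for `g`. -/
def nuV (g : Vec → Mtx) (x : Vec) : Vec := fun i =>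
  (∑ j, minv (g x) i j * x j) /
    Real.sqrt (∑ i, ∑ j, minv (g x) i j * x i * x j)

/-- Normal derivative `∂_ν u`. -/
def dnu (g : Vec → Mtx) (u : Vec → ℝ) (x : Vec) : ℝ := ∑ i, nuV g x i * pd i u x

/-- `g(X, ν)`. -/
def gXnu (g : Vec → Mtx) (X : Vec → Vec) (x : Vec) : ℝ :=
  ∑ i, ∑ j, g x i j * X x i * nuV g x j

/-- `π(X, ν)`. -/
def piXnu (g p : Vec → Mtx) (X : Vec → Vec) (x : Vec) : ℝ :=
  ∑ i, ∑ j, p x i j * X x i * nuV g x j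

/-- Covariant derivative `D_ν X`. -/
def covDnuX (g : Vec → Mtx) (X : Vec → Vec) (x : Vec) : Vec := fun i =>
  ∑ k, nuV g x k * (pd k (fun y => X y i) x + ∑ l, Gam g i k l x * X x l)

/-- The boundary operator `B_ν`. -/
def Bnu (g p : Vec → Mtx) (U : PairF) : PairF :=
  (fun x => -8 * dnu g U.1 x + trT g p x * gXnu g U.2 x - 4 * piXnu g p U.2 x,
   fun x i => -2 * covDnuX g U.2 x i)

/-- The boundary operator `B_ν^*`. -/
def BnuStar (g p : Vec → Mtx) (U : PairF) : PairF :=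
  (fun x => -8 * dnu g U.1 x - 4 * trT g p x * gXnu g U.2 x + 8 * piXnu g p U.2 x,
   fun x i => -2 * covDnuX g U.2 x i)

/-! ## The class `ℰ(∂Σ)` of boundary perturbations -/

/-- An element `F = (b, ω, Z, ξ)` of `ℰ(∂Σ)`. -/
structure EBdry : Type where
  b : Vec → ℝ
  om : Vec → Vec
  Z : Vec → Vec
  xi : Vec → Mtx

/-- Smoothness of an element of `ℰ(∂Σ)`. -/
def EBdry.Smooth (F : EBdry) : Prop :=
  ContDiff ℝ (⊤ : ℕ∞) F.b ∧ ContDiff ℝ (⊤ : ℕ∞) F.om ∧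
    ContDiff ℝ (⊤ : ℕ∞) F.Z ∧ ContDiff ℝ (⊤ : ℕ∞) F.xi

/-- Action of `F ∈ ℰ(∂Σ)` on pairs. -/
def EBdry.app (F : EBdry) (U : PairF) : PairF :=
  (fun x => F.b x * U.1 x + ∑ i, F.om x i * U.2 x i,
   fun x i => U.1 x * F.Z x i + ∑ j, F.xi x i j * U.2 x j)

/-- The transpose `F^* = (b, Z^♭, ω^♯, ξ^♮)`. -/
def EBdry.star (g : Vec → Mtx) (F : EBdry) : EBdry where
  b := F.b
  om := fun x i => ∑ j, g x i j * F.Z x j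
  Z := fun x i => ∑ j, minv (g x) i j * F.om x j
  xi := fun x i j => ∑ l, ∑ k, minv (g x) j l * F.xi x l k * g x k i

/-- The identity element `Id ∈ ℰ(∂Σ)`. -/
def EBdry.id : EBdry where
  b := fun _ => 1
  om := fun _ _ => 0
  Z := fun _ _ => 0
  xi := fun _ => idMtx

/-- The boundary operator `B_ν + F`. -/
def PBC (g p : Vec → Mtx) (F : EBdry) (U : PairF) : PairF := Bnu g p U + F.app U

/-- The boundary operator `B_ν^* + F^*`. -/
def PBCStar (g p : Vec → Mtx) (F : EBdry) (U : PairF) : PairF :=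
  BnuStar g p U + (F.star g).app U

/-! ## Weighted Sobolev spaces -/

/-- Integrand of the weighted Sobolev seminorm of order `n` and weight `δ`. -/
def wIntegrand {E : Type} [NormedAddCommGroup E] [NormedSpace ℝ E]
    (g : Vec → Mtx) (n : ℕ) (δ : ℝ) (f : Vec → E) (x : Vec) : ℝ :=
  ((1 + rad x) ^ (-δ - 3 / 2 + (n : ℝ)) * ‖iteratedFDeriv ℝ n f x‖) ^ 2 * dens g x

/-- Membership in `H^k_δ(Σ)`. -/
def MemW {E : Type} [NormedAddCommGroup E] [NormedSpace ℝ E]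
    (g : Vec → Mtx) (r₀ : ℝ) (k : ℕ) (δ : ℝ) (f : Vec → E) : Prop :=
  ∀ n ≤ k, IntegrableOn (wIntegrand g n δ f) (Sig r₀) volume

/-- The `H^k_δ(Σ)` norm. -/
def wNorm {E : Type} [NormedAddCommGroup E] [NormedSpace ℝ E]
    (g : Vec → Mtx) (r₀ : ℝ) (k : ℕ) (δ : ℝ) (f : Vec → E) : ℝ :=
  ∑ n ∈ Finset.range (k + 1), Real.sqrt (∫ x in Sig r₀, wIntegrand g n δ f x)

/-- Membership of a pair in `H^k_δ(Σ)`. -/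
def MemWPair (g : Vec → Mtx) (r₀ : ℝ) (k : ℕ) (δ : ℝ) (U : PairF) : Prop :=
  MemW g r₀ k δ U.1 ∧ MemW g r₀ k δ U.2

/-- The `H^k_δ(Σ)` norm of a pair. -/
def wNormPair (g : Vec → Mtx) (r₀ : ℝ) (k : ℕ) (δ : ℝ) (U : PairF) : ℝ :=
  wNorm g r₀ k δ U.1 + wNorm g r₀ k δ U.2

/-- Pointwise inner product `𝕌·𝕍 = uv + g(X,Y)` of two pairs. -/
def dotPair (g : Vec → Mtx) (U V : PairF) (x : Vec) : ℝ :=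
  U.1 x * V.1 x + ∑ i, ∑ j, g x i j * U.2 x i * V.2 x j

/-- `L²(Σ)` inner product of pairs (with respect to the volume form of `g`). -/
def L2inner (g : Vec → Mtx) (r₀ : ℝ) (U V : PairF) : ℝ :=
  ∫ x in Sig r₀, dotPair g U V x * dens g x

/-! ## Boundary integrals and boundary Sobolev norms -/

/-- Spherical parametrization of the sphere of radius `r`. -/
def sphPt (r θ φ : ℝ) : Vec :=
  ![r * Real.sin θ * Real.cos φ, r * Real.sin θ * Real.sin φ, r * Real.cos θ]

def sphTh (r θ φ : ℝ) : Vec :=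
  ![r * Real.cos θ * Real.cos φ, r * Real.cos θ * Real.sin φ, -(r * Real.sin θ)]

def sphPh (r θ φ : ℝ) : Vec :=
  ![-(r * Real.sin θ * Real.sin φ), r * Real.sin θ * Real.cos φ, 0]

/-- Value of the metric on two vectors. -/
def gOf (g : Vec → Mtx) (x v w : Vec) : ℝ := ∑ i, ∑ j, g x i j * v i * w j

/-- Area density of the metric induced by `g` on `∂Σ`. -/
def bdryDens (g : Vec → Mtx) (r₀ θ φ : ℝ) : ℝ :=
  Real.sqrt (gOf g (sphPt r₀ θ φ) (sphTh r₀ θ φ) (sphTh r₀ θ φ)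
      * gOf g (sphPt r₀ θ φ) (sphPh r₀ θ φ) (sphPh r₀ θ φ)
    - gOf g (sphPt r₀ θ φ) (sphTh r₀ θ φ) (sphPh r₀ θ φ) ^ 2)

/-- Integral over `∂Σ` with respect to the area measure induced by `g`. -/
def bdryIntegral (g : Vec → Mtx) (r₀ : ℝ) (f : Vec → ℝ) : ℝ :=
  ∫ θ in (0 : ℝ)..Real.pi, ∫ φ in (0 : ℝ)..(2 * Real.pi),
    f (sphPt r₀ θ φ) * bdryDens g r₀ θ φ

/-- A fixed collar neighbourhood of `∂Σ` in `Σ`. -/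
def annulus (r₀ : ℝ) : Set Vec := {x | r₀ ≤ rad x ∧ rad x ≤ r₀ + 1}

/-- The `H¹` norm on the collar, used to define the trace norm. -/
def H1AnnNorm {E : Type} [NormedAddCommGroup E] [NormedSpace ℝ E]
    (r₀ : ℝ) (u : Vec → E) : ℝ :=
  Real.sqrt (∫ x in annulus r₀, (‖u x‖ ^ 2 + ‖fderiv ℝ u x‖ ^ 2))

/-- Membership in the trace space `H^{1/2}(∂Σ)`. -/
def MemHHalf {E : Type} [NormedAddCommGroup E] [NormedSpace ℝ E]
    (r₀ : ℝ) (h : Vec → E) : Prop :=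
  ∃ u : Vec → E, (∀ x ∈ bdry r₀, u x = h x) ∧
    IntegrableOn (fun x => ‖u x‖ ^ 2 + ‖fderiv ℝ u x‖ ^ 2) (annulus r₀) volume

/-- The `H^{1/2}(∂Σ)` (trace) norm. -/
def hHalfNorm {E : Type} [NormedAddCommGroup E] [NormedSpace ℝ E]
    (r₀ : ℝ) (h : Vec → E) : ℝ :=
  sInf {c : ℝ | 0 ≤ c ∧ ∃ u : Vec → E, (∀ x ∈ bdry r₀, u x = h x) ∧
    IntegrableOn (fun x => ‖u x‖ ^ 2 + ‖fderiv ℝ u x‖ ^ 2) (annulus r₀) volume ∧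
    H1AnnNorm r₀ u ≤ c}

/-- `H^{1/2}(∂Σ)` membership for pairs. -/
def MemHHalfPair (r₀ : ℝ) (U : PairF) : Prop := MemHHalf r₀ U.1 ∧ MemHHalf r₀ U.2

/-- `H^{1/2}(∂Σ)` norm of a pair. -/
def hHalfNormPair (r₀ : ℝ) (U : PairF) : ℝ := hHalfNorm r₀ U.1 + hHalfNorm r₀ U.2

/-! ## Kernels of the boundary value problems -/

/-- The kernel of `P_{F,δ} = (P, B_ν + F) : H²_δ(Σ) → L²_{δ-2}(Σ) × H^{1/2}(∂Σ)`. -/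
def kerSet (g p : Vec → Mtx) (r₀ : ℝ) (F : EBdry) (δ : ℝ) : Set PairF :=
  {U | MemWPair g r₀ 2 δ U
    ∧ (∀ x ∈ Sig r₀, (Pop g p U).1 x = 0 ∧ ∀ i, (Pop g p U).2 x i = 0)
    ∧ (∀ x ∈ bdry r₀, (PBC g p F U).1 x = 0 ∧ ∀ i, (PBC g p F U).2 x i = 0)}

/-- The kernel of `P^*_{F,δ} = (P^*, B_ν^* + F^*)`. -/
def kerSetStar (g p : Vec → Mtx) (r₀ : ℝ) (F : EBdry) (δ : ℝ) : Set PairF :=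
  {U | MemWPair g r₀ 2 δ U
    ∧ (∀ x ∈ Sig r₀, (PopStar g p U).1 x = 0 ∧ ∀ i, (PopStar g p U).2 x i = 0)
    ∧ (∀ x ∈ bdry r₀, (PBCStar g p F U).1 x = 0 ∧ ∀ i, (PBCStar g p F U).2 x i = 0)}

/-- Dimension (as a cardinal) of the kernel of `P_{F,δ}`. -/
def kerRank (g p : Vec → Mtx) (r₀ : ℝ) (F : EBdry) (δ : ℝ) : Cardinal :=
  Module.rank ℝ (Submodule.span ℝ (kerSet g p r₀ F δ))

/-- Dimension (as a cardinal) of the kernel of `P^*_{F,δ}`. -/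
def kerRankStar (g p : Vec → Mtx) (r₀ : ℝ) (F : EBdry) (δ : ℝ) : Cardinal :=
  Module.rank ℝ (Submodule.span ℝ (kerSetStar g p r₀ F δ))


/-! ## Statement 18: Lemma 5.4, regularity of KIDS at the boundary -/

/-- Second covariant derivative `D_a D_b T_{ij}` of a 2-tensor. -/
def covD2T (g T : Vec → Mtx) (a b i j : Fin 3) (x : Vec) : ℝ :=
  pd a (fun y => covD g T b i j y) x
    - ∑ c, (Gam g c a b x * covD g T c i j x
        + Gam g c a i x * covD g T b c j x
        + Gam g c a j x * covD g T b i c x)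

/-- The linearization `DH[g,π](h,ϖ)` (formula (2.7)). -/
def DHlin (g p h ϖ : Vec → Mtx) (x : Vec) : ℝ :=
  - lapl g (fun y => trT g h y) x
    + (∑ i, ∑ j, ∑ a, ∑ b, minv (g x) i a * minv (g x) j b * covD2T g h a b i j x)
    - (∑ i, ∑ j, raise2 g h x i j * RicT g i j x)
    + trT g p x * (trT g ϖ x - ∑ i, ∑ j, raise2 g p x i j * h x i j)
    - 2 * (∑ i, ∑ j, raise2 g p x i j * ϖ x i j)
    + 2 * (∑ i, ∑ j, raise2 g h x i j * ∑ k, ∑ l, minv (g x) k l * p x i k * p x j l)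

/-- The linearization `DM[g,π](h,ϖ)_i` (formula (2.8)). -/
def DMlin (g p h ϖ : Vec → Mtx) (i : Fin 3) (x : Vec) : ℝ :=
  divT g ϖ i x - (∑ k, ∑ l, raise2 g h x k l * covD g p k l i x)
    - (∑ j, (∑ a, minv (g x) j a * p x i a) *
        ∑ k, ∑ l, minv (g x) k l * (covD g h k l j x - (1 / 2) * covD g h j k l x))
    - (1 / 2) * (∑ k, ∑ l, raise2 g p x k l * covD g h i k l x)

/-- The linearized constraint operator `DΦ[g,π](h,ϖ) = (−DH[g,π](h,ϖ), 2DM[g,π](h,ϖ))`. -/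
def DPhi (g p h ϖ : Vec → Mtx) : PairF :=
  (fun x => -(DHlin g p h ϖ x), fun x i => 2 * DMlin g p h ϖ i x)

/-- `(f,X)` satisfies `DΦ[ḡ,π̄]^*(f,X) = 0` on a set `O`: distributionally, the pairing
`∫_Σ ⟨DΦ[ḡ,π̄](h,ϖ), (f,X)⟩ dμ_ḡ` vanishes for every pair of smooth symmetric 2-tensors
`(h,ϖ)` compactly supported in the interior of `Σ ∩ O`. -/
def KIDon (g p : Vec → Mtx) (r₀ : ℝ) (U : PairF) (O : Set Vec) : Prop :=
  ∀ h ϖ : Vec → Mtx,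
    ContDiff ℝ (⊤ : ℕ∞) h → ContDiff ℝ (⊤ : ℕ∞) ϖ →
    (∀ x i j, h x i j = h x j i) → (∀ x i j, ϖ x i j = ϖ x j i) →
    IsCompact (tsupport h) → IsCompact (tsupport ϖ) →
    tsupport h ⊆ O ∩ {x | r₀ < rad x} → tsupport ϖ ⊆ O ∩ {x | r₀ < rad x} →
    (∫ x in Sig r₀,
      ((DPhi g p h ϖ).1 x * U.1 x + ∑ i, (DPhi g p h ϖ).2 x i * U.2 x i)
        * dens g x) = 0

/-- A function on `∂Σ` is analytic if it extends to a function analytic in a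
neighbourhood of the sphere `∂Σ`. -/
def AnalyticOnBdry {E : Type} [NormedAddCommGroup E] [NormedSpace ℝ E]
    (r₀ : ℝ) (f : Vec → E) : Prop :=
  ∃ F : Vec → E, AnalyticOnNhd ℝ F (bdry r₀) ∧ ∀ x ∈ bdry r₀, F x = f x

/-!
In the interior collar the KID equations can be tested on `h = φ E` and `ϖ = φ E` with `E` an
analytic symmetric tensor. Integrating by parts, modulo terms of lower order with analytic
coefficients they determine `∂ₐ∂_b f`, and `S_ab = ∂ₐX_b + ∂_bX_a` is of order zero in `(f, X)`.
Hence `∂_m∂ₐX_b = ½ (∂_m S_ab + ∂ₐS_bm - ∂_b S_ma)` is of first order too, and the 1-jet `W` of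
`(f, X_b)` solves a closed linear system `dW = A(x) W` whose coefficients `A` are analytic across
the sphere.

The system holds only outside the sphere, but `W` is smooth up to it, so the system gives Cauchy
estimates `‖DⁿW‖ ≤ K n! Rⁿ` which are uniform near a boundary point `x₀`. The Taylor series of `W`
at an exterior point `y₀` close to `x₀` therefore converges on a ball containing `x₀`, and its sum
equals `W` at every point visible from `y₀` through the exterior, in particular on the sphere near
`x₀`.
-/

open Filter Topology

/-! ### Cauchy estimates for analytic linear systems -/

section CauchyEstimates

open scoped Nat

variable {E F : Type*} [NormedAddCommGroup E] [NormedSpace ℝ E]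
  [NormedAddCommGroup F] [NormedSpace ℝ F]

/-- The Cauchy estimates `‖Dⁿw(y)‖ ≤ K n! Rⁿ` at the point `y`. -/
def HasCauchyBound (w : E → F) (K R : ℝ) (y : E) : Prop :=
  ∀ n : ℕ, ‖iteratedFDeriv ℝ n w y‖ ≤ K * n ! * R ^ n

/-- The Taylor series `∑ (n!)⁻¹ Dⁿw(y)` of `w` at `y`. -/
def taylorSeries (w : E → F) (y : E) : FormalMultilinearSeries ℝ E F :=
  fun n => (n ! : ℝ)⁻¹ • iteratedFDeriv ℝ n w y

theorem exists_nnnorm_changeOrigin_mul_pow_le (p : FormalMultilinearSeries ℝ E F) {r r' : NNReal}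
    (h : (r + r' : ENNReal) < p.radius) :
    ∃ T : NNReal, ∀ y : E, ‖y‖₊ ≤ r → ∀ k, ‖p.changeOrigin y k‖₊ * r' ^ k ≤ T := by
  refine ⟨∑' s : Σ k l : ℕ, {s : Finset (Fin (k + l)) // s.card = l},
    ‖p (s.1 + s.2.1)‖₊ * r ^ s.2.1 * r' ^ s.1, fun y hy k => ?_⟩
  have hr : (r : ENNReal) < p.radius := lt_of_le_of_lt le_self_add h
  have hyr : (‖y‖₊ : ENNReal) < p.radius := lt_of_le_of_lt (mod_cast hy) hr
  calc ‖p.changeOrigin y k‖₊ * r' ^ k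
      ≤ (∑' s : Σ l : ℕ, {s : Finset (Fin (k + l)) // s.card = l},
          ‖p (k + s.1)‖₊ * ‖y‖₊ ^ s.1) * r' ^ k := by
        gcongr
        exact p.nnnorm_changeOrigin_le k hyr
    _ ≤ (∑' s : Σ l : ℕ, {s : Finset (Fin (k + l)) // s.card = l},
          ‖p (k + s.1)‖₊ * r ^ s.1) * r' ^ k := by
        gcongr ?_ * _
        refine Summable.tsum_le_tsum (fun s => ?_) (p.changeOriginSeries_summable_aux₂ hyr k)
          (p.changeOriginSeries_summable_aux₂ hr k)
        gcongr
    _ = ∑' s : Σ l : ℕ, {s : Finset (Fin (k + l)) // s.card = l},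
          ‖p (k + s.1)‖₊ * r ^ s.1 * r' ^ k := (NNReal.tsum_mul_right _ _).symm
    _ ≤ _ := NNReal.tsum_comp_le_tsum_of_inj (p.changeOriginSeries_summable_aux₁ h)
        (i := Sigma.mk k) sigma_mk_injective

theorem norm_iteratedFDeriv_le_of_hasFPowerSeriesOnBall [CompleteSpace F] {f : E → F}
    {p : FormalMultilinearSeries ℝ E F} {x : E} {r : ENNReal} (h : HasFPowerSeriesOnBall f p x r)
    (n : ℕ) : ‖iteratedFDeriv ℝ n f x‖ ≤ n ! * ‖p n‖ := by
  refine ContinuousMultilinearMap.opNorm_le_bound (by positivity) fun v => ?_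
  rw [h.iteratedFDeriv_eq_sum_of_completeSpace v]
  calc ‖∑ σ : Equiv.Perm (Fin n), p n (fun i => v (σ i))‖
      ≤ ∑ _σ : Equiv.Perm (Fin n), ‖p n‖ * ∏ i, ‖v i‖ := norm_sum_le_of_le _ fun σ _ => by
        rw [← Equiv.prod_comp σ fun i => ‖v i‖]
        exact (p n).le_opNorm _
    _ = n ! * ‖p n‖ * ∏ i, ‖v i‖ := by
        rw [sum_const, card_univ, Fintype.card_perm, Fintype.card_fin, nsmul_eq_mul, mul_assoc]

theorem eventually_hasCauchyBound_of_analyticAt [CompleteSpace F] {f : E → F} {x : E}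
    (hf : AnalyticAt ℝ f x) : ∃ M C : ℝ, 0 ≤ M ∧ 0 < C ∧ ∀ᶠ y in 𝓝 x, HasCauchyBound f M C y := by
  obtain ⟨p, R, hp⟩ := hf
  obtain ⟨s, hs, hsR⟩ := ENNReal.lt_iff_exists_nnreal_btwn.1 hp.r_pos
  have hr : 0 < s / 2 := half_pos (mod_cast hs)
  obtain ⟨T, hT⟩ := exists_nnnorm_changeOrigin_mul_pow_le p (r := s / 2) (r' := s / 2) <| by
    rw [← ENNReal.coe_add, add_halves]
    exact hsR.trans_le hp.r_le
  refine ⟨T, (s / 2 : NNReal)⁻¹, T.2, by positivity, ?_⟩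
  filter_upwards [Metric.ball_mem_nhds x (NNReal.coe_pos.2 hr)] with y hy n
  have hys : ‖y - x‖₊ < s / 2 := by rwa [Metric.mem_ball, dist_eq_norm] at hy
  have hyR : (‖y - x‖₊ : ENNReal) < R :=
    lt_trans (mod_cast hys.trans (half_lt_self (mod_cast hs))) hsR
  have hpy : HasFPowerSeriesOnBall f (p.changeOrigin (y - x)) y (R - ‖y - x‖₊) := by
    simpa only [add_sub_cancel] using hp.changeOrigin hyR
  have hbound : ‖p.changeOrigin (y - x) n‖ ≤ T * ((s / 2 : NNReal) : ℝ)⁻¹ ^ n := by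
    rw [inv_pow, ← div_eq_mul_inv, le_div_iff₀ (by positivity)]
    exact_mod_cast hT (y - x) hys.le n
  calc ‖iteratedFDeriv ℝ n f y‖ ≤ n ! * ‖p.changeOrigin (y - x) n‖ :=
        norm_iteratedFDeriv_le_of_hasFPowerSeriesOnBall hpy n
    _ ≤ n ! * (T * ((s / 2 : NNReal) : ℝ)⁻¹ ^ n) := by gcongr
    _ = T * n ! * ((s / 2 : NNReal) : ℝ)⁻¹ ^ n := by ring

theorem sum_choose_mul_mul_le {a b : ℕ → ℝ} {M C K R : ℝ} {n : ℕ} (hC : 0 ≤ C) (hCR : 2 * C ≤ R)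
    (ha₀ : ∀ i ≤ n, 0 ≤ a i) (hb₀ : ∀ i ≤ n, 0 ≤ b i) (ha : ∀ i ≤ n, a i ≤ M * i ! * C ^ i)
    (hb : ∀ i ≤ n, b i ≤ K * i ! * R ^ i) :
    ∑ i ∈ range (n + 1), (n.choose i : ℝ) * a i * b (n - i) ≤ 2 * M * K * n ! * R ^ n := by
  have hR : 0 ≤ R := by linarith
  have hM : 0 ≤ M := by simpa using (ha₀ 0 n.zero_le).trans (ha 0 n.zero_le)
  have hK : 0 ≤ K := by simpa using (hb₀ 0 n.zero_le).trans (hb 0 n.zero_le)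
  have hterm : ∀ i ∈ range (n + 1),
      (n.choose i : ℝ) * a i * b (n - i) ≤ M * K * n ! * R ^ n * (1 / 2) ^ i := by
    intro i hi
    have hin : i ≤ n := mem_range_succ_iff.1 hi
    have hchoose : (n.choose i : ℝ) * i ! * (n - i) ! = n ! :=
      mod_cast Nat.choose_mul_factorial_mul_factorial hin
    have hpow : C ^ i ≤ R ^ i * (1 / 2) ^ i := by
      rw [← mul_pow]
      exact pow_le_pow_left₀ hC (by linarith) i
    have hbn : 0 ≤ b (n - i) := hb₀ _ (Nat.sub_le n i)
    calc (n.choose i : ℝ) * a i * b (n - i)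
        ≤ n.choose i * (M * i ! * C ^ i) * (K * (n - i) ! * R ^ (n - i)) := by
          gcongr
          exacts [ha i hin, hb _ (Nat.sub_le n i)]
      _ = M * K * (n.choose i * i ! * (n - i) !) * R ^ (n - i) * C ^ i := by ring
      _ ≤ M * K * (n.choose i * i ! * (n - i) !) * R ^ (n - i) * (R ^ i * (1 / 2) ^ i) := by gcongr
      _ = M * K * n ! * (R ^ (n - i) * R ^ i) * (1 / 2) ^ i := by rw [hchoose]; ring
      _ = M * K * n ! * R ^ n * (1 / 2) ^ i := by rw [← pow_add, Nat.sub_add_cancel hin]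
  calc ∑ i ∈ range (n + 1), (n.choose i : ℝ) * a i * b (n - i)
      ≤ M * K * n ! * R ^ n * ∑ i ∈ range (n + 1), (1 / 2 : ℝ) ^ i := by
        rw [mul_sum]
        exact sum_le_sum hterm
    _ ≤ M * K * n ! * R ^ n * 2 := by
        gcongr
        exact sum_geometric_two_le _
    _ = 2 * M * K * n ! * R ^ n := by ring

theorem hasCauchyBound_of_fderiv_eq_clm_apply {w : E → F} {A : E → F →L[ℝ] E →L[ℝ] F} {Ω : Set E}
    (hΩ : IsOpen Ω) (hw : ContDiffOn ℝ (⊤ : ℕ∞) w Ω) (hA : ContDiffOn ℝ (⊤ : ℕ∞) A Ω)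
    (heq : ∀ x ∈ Ω, fderiv ℝ w x = A x (w x)) {M C K R : ℝ} (hC : 0 ≤ C)
    (hbA : ∀ y ∈ Ω, HasCauchyBound A M C y) (hbw : ∀ y ∈ Ω, ‖w y‖ ≤ K)
    (hCR : 2 * C ≤ R) (hMR : 2 * M ≤ R) : ∀ y ∈ Ω, HasCauchyBound w K R y := by
  intro y hy n
  have hR : 0 ≤ R := by linarith
  have hK : 0 ≤ K := (norm_nonneg _).trans (hbw y hy)
  induction n using Nat.strong_induction_on with
  | _ n ih =>
  rcases n with _ | n
  · simpa using hbw y hy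
  have hderiv : iteratedFDeriv ℝ n (fderiv ℝ w) y
      = iteratedFDerivWithin ℝ n (fun x => A x (w x)) Ω y := by
    rw [← iteratedFDerivWithin_of_isOpen n hΩ hy]
    exact iteratedFDerivWithin_congr heq hy n
  calc ‖iteratedFDeriv ℝ (n + 1) w y‖
      ≤ ∑ i ∈ range (n + 1), (n.choose i : ℝ) * ‖iteratedFDerivWithin ℝ i A Ω y‖ *
          ‖iteratedFDerivWithin ℝ (n - i) w Ω y‖ := by
        rw [← norm_iteratedFDeriv_fderiv, hderiv]
        exact norm_iteratedFDerivWithin_clm_apply hA hw hΩ.uniqueDiffOn hy (mod_cast le_top)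
    _ = ∑ i ∈ range (n + 1), (n.choose i : ℝ) * ‖iteratedFDeriv ℝ i A y‖ *
          ‖iteratedFDeriv ℝ (n - i) w y‖ := by
        simp only [iteratedFDerivWithin_of_isOpen _ hΩ hy]
    _ ≤ 2 * M * K * n ! * R ^ n :=
        sum_choose_mul_mul_le (a := fun i => ‖iteratedFDeriv ℝ i A y‖)
          (b := fun i => ‖iteratedFDeriv ℝ i w y‖) hC hCR (fun _ _ => norm_nonneg _)
          (fun _ _ => norm_nonneg _) (fun i _ => hbA y hy i)
          (fun i hi => ih i (Nat.lt_succ_of_le hi))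
    _ ≤ R * K * n ! * R ^ n := by gcongr
    _ ≤ (n + 1) * (R * K * n ! * R ^ n) :=
        le_mul_of_one_le_left (by positivity) (by simp)
    _ = K * (n + 1)! * R ^ (n + 1) := by
        rw [Nat.factorial_succ]
        push_cast
        ring

theorem norm_sub_taylor_sum_le {w : E → F} [CompleteSpace F] {y v : E} {n : ℕ} {B : ℝ}
    (hw : ∀ t ∈ Set.Icc (0 : ℝ) 1, ContDiffAt ℝ (n + 1) w (y + t • v))
    (hB : ∀ t ∈ Set.Ioo (0 : ℝ) 1, ‖iteratedFDeriv ℝ (n + 1) w (y + t • v)‖ ≤ B) :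
    ‖w (y + v) - ∑ k ∈ range (n + 1), taylorSeries w y k (fun _ => v)‖
      ≤ (n ! : ℝ)⁻¹ * (B * ‖v‖ ^ (n + 1)) := by
  have hrem : w (y + v) - ∑ k ∈ range (n + 1), taylorSeries w y k (fun _ => v) =
      (n ! : ℝ)⁻¹ • ∫ t in (0 : ℝ)..1, (1 - t) ^ n •
        iteratedFDeriv ℝ (n + 1) w (y + t • v) (fun _ => v) := by
    rw [map_add_eq_sum_add_integral_iteratedFDeriv hw]
    simp only [taylorSeries, smul_apply, add_sub_cancel_left]
  have hintegrand : ∀ t ∈ Set.Ioo (0 : ℝ) 1,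
      ‖(1 - t) ^ n • iteratedFDeriv ℝ (n + 1) w (y + t • v) (fun _ => v)‖
        ≤ B * ‖v‖ ^ (n + 1) := fun t ht => by
    have hpow : ‖(1 - t) ^ n‖ ≤ 1 := by
      rw [norm_pow]
      refine pow_le_one₀ (norm_nonneg _) ?_
      rw [Real.norm_eq_abs, abs_le]
      exact ⟨by linarith [ht.2], by linarith [ht.1]⟩
    calc ‖(1 - t) ^ n • iteratedFDeriv ℝ (n + 1) w (y + t • v) (fun _ => v)‖
        ≤ 1 * (‖iteratedFDeriv ℝ (n + 1) w (y + t • v)‖ * ∏ _i : Fin (n + 1), ‖v‖) := by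
          rw [norm_smul]
          gcongr
          exact ContinuousMultilinearMap.le_opNorm _ _
      _ ≤ B * ‖v‖ ^ (n + 1) := by
          rw [one_mul, prod_const, card_univ, Fintype.card_fin]
          gcongr
          exact hB t ht
  rw [hrem, norm_smul, norm_inv, RCLike.norm_natCast]
  gcongr
  refine (intervalIntegral.norm_integral_le_of_norm_le_const_ae (C := B * ‖v‖ ^ (n + 1)) ?_).trans
    (by simp)
  filter_upwards [Measure.ae_ne volume (1 : ℝ)] with t ht hmem
  rw [Set.uIoc_of_le zero_le_one] at hmem
  exact hintegrand t ⟨hmem.1, lt_of_le_of_ne hmem.2 ht⟩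

theorem tendsto_taylor_sum_of_hasCauchyBound [CompleteSpace F] {w : E → F} {y v : E} {K R : ℝ}
    (hw : ContDiff ℝ (⊤ : ℕ∞) w)
    (hb : ∀ t ∈ Set.Ioo (0 : ℝ) 1, HasCauchyBound w K R (y + t • v)) (hR : 0 ≤ R)
    (hv : R * ‖v‖ < 1) :
    Tendsto (fun n => ∑ k ∈ range (n + 1), taylorSeries w y k (fun _ => v)) atTop
      (𝓝 (w (y + v))) := by
  have hbound : ∀ n : ℕ, ‖w (y + v) - ∑ k ∈ range (n + 1), taylorSeries w y k (fun _ => v)‖ ≤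
      K * ((n + 1 : ℕ) * (R * ‖v‖) ^ (n + 1)) := fun n => by
    refine (norm_sub_taylor_sum_le (fun t _ => (hw.of_le (mod_cast le_top)).contDiffAt)
      fun t ht => hb t ht (n + 1)).trans_eq ?_
    rw [Nat.factorial_succ, Nat.cast_mul, mul_pow]
    field_simp
  have hlim : Tendsto (fun n : ℕ => K * ((n + 1 : ℕ) * (R * ‖v‖) ^ (n + 1))) atTop (𝓝 0) := by
    have := (tendsto_self_mul_const_pow_of_lt_one (by positivity) hv).comp (tendsto_add_atTop_nat 1)
    simpa using this.const_mul K
  have hsub := squeeze_zero_norm hbound hlim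
  simpa using hsub.const_sub (w (y + v))

theorem ofReal_inv_le_radius_taylorSeries {w : E → F} {y : E} {K R : ℝ} (hR : 0 < R)
    (hb : HasCauchyBound w K R y) : ENNReal.ofReal R⁻¹ ≤ (taylorSeries w y).radius := by
  refine (taylorSeries w y).le_radius_of_bound K (r := Real.toNNReal R⁻¹) fun n => ?_
  rw [Real.coe_toNNReal _ (by positivity), taylorSeries, norm_smul, norm_inv, RCLike.norm_natCast]
  calc (n ! : ℝ)⁻¹ * ‖iteratedFDeriv ℝ n w y‖ * R⁻¹ ^ n
      ≤ (n ! : ℝ)⁻¹ * (K * n ! * R ^ n) * R⁻¹ ^ n := by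
        gcongr
        exact hb n
    _ = K * (R * R⁻¹) ^ n := by
        rw [mul_pow]
        field_simp
    _ = K := by rw [mul_inv_cancel₀ hR.ne', one_pow, mul_one]

theorem taylorSeries_sum_eq [CompleteSpace F] {w : E → F} {y v : E} {K R : ℝ}
    (hw : ContDiff ℝ (⊤ : ℕ∞) w) (hR : 0 < R) (hy : HasCauchyBound w K R y)
    (hb : ∀ t ∈ Set.Ioo (0 : ℝ) 1, HasCauchyBound w K R (y + t • v)) (hv : ‖v‖ < R⁻¹) :
    (taylorSeries w y).sum v = w (y + v) := by
  have hmem : v ∈ Metric.eball (0 : E) (taylorSeries w y).radius := by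
    refine Metric.eball_subset_eball (ofReal_inv_le_radius_taylorSeries hR hy) ?_
    rwa [Metric.eball_ofReal, mem_ball_zero_iff]
  have hsum := ((taylorSeries w y).hasSum hmem).tendsto_sum_nat
  have hRv : R * ‖v‖ < 1 := by rwa [← lt_inv_mul_iff₀ hR, mul_one]
  exact tendsto_nhds_unique (hsum.comp (tendsto_add_atTop_nat 1))
    (tendsto_taylor_sum_of_hasCauchyBound hw hb hR.le hRv)

theorem analyticAt_taylorSeries_sum [CompleteSpace F] {w : E → F} {x y : E} {K R : ℝ} (hR : 0 < R)
    (hy : HasCauchyBound w K R y) (hxy : ‖x - y‖ < R⁻¹) :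
    AnalyticAt ℝ (fun z => (taylorSeries w y).sum (z - y)) x := by
  have hradius := ofReal_inv_le_radius_taylorSeries hR hy
  have hmem : x - y ∈ Metric.eball (0 : E) (taylorSeries w y).radius := by
    refine Metric.eball_subset_eball hradius ?_
    rwa [Metric.eball_ofReal, mem_ball_zero_iff]
  have hpos : 0 < (taylorSeries w y).radius :=
    lt_of_lt_of_le (ENNReal.ofReal_pos.2 (by positivity)) hradius
  have hsum := ((taylorSeries w y).hasFPowerSeriesOnBall hpos).analyticAt_of_mem hmem
  exact AnalyticAt.comp (f := fun z => z - y) hsum (by fun_prop)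

theorem exists_analyticAt_eq_of_fderiv_eq_clm_apply [CompleteSpace F] {w : E → F}
    {A : E → F →L[ℝ] E →L[ℝ] F} {Ω : Set E} (hΩ : IsOpen Ω) {x₀ : E}
    (hw : ContDiff ℝ (⊤ : ℕ∞) w) (hA : AnalyticAt ℝ A x₀)
    (heq : ∀ x ∈ Ω, fderiv ℝ w x = A x (w x)) :
    ∃ ρ > 0, ∀ y₀ ∈ Metric.ball x₀ ρ ∩ Ω, ∃ G : E → F, AnalyticAt ℝ G x₀ ∧
      ∀ x ∈ Metric.ball x₀ ρ, openSegment ℝ y₀ x ⊆ Ω → G x = w x := by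
  obtain ⟨M, C, hM, hC, hbA⟩ := eventually_hasCauchyBound_of_analyticAt hA
  have hbw : ∀ᶠ y in 𝓝 x₀, ‖w y‖ < ‖w x₀‖ + 1 :=
    hw.continuous.norm.continuousAt.eventually_lt_const (lt_add_one _)
  obtain ⟨ρ₁, hρ₁, hball⟩ := Metric.eventually_nhds_iff_ball.1
    ((hbA.and hbw).and hA.eventually_analyticAt)
  set R := 2 * C + 2 * M
  have hR : 0 < R := by positivity
  set ρ := min ρ₁ (R⁻¹ / 2)
  have hρ : Metric.ball x₀ ρ ⊆ Metric.ball x₀ ρ₁ := Metric.ball_subset_ball (min_le_left _ _)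
  have hbound : ∀ y ∈ Ω ∩ Metric.ball x₀ ρ, HasCauchyBound w (‖w x₀‖ + 1) R y :=
    hasCauchyBound_of_fderiv_eq_clm_apply (hΩ.inter Metric.isOpen_ball) hw.contDiffOn
      (fun y hy => (hball y (hρ hy.2)).2.contDiffAt.contDiffWithinAt) (fun x hx => heq x hx.1) hC.le
      (fun y hy => (hball y (hρ hy.2)).1.1) (fun y hy => (hball y (hρ hy.2)).1.2.le)
      (by linarith) (by linarith)
  refine ⟨ρ, by positivity, fun y₀ hy₀ => ⟨fun x => (taylorSeries w y₀).sum (x - y₀), ?_, ?_⟩⟩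
  · refine analyticAt_taylorSeries_sum hR (hbound y₀ hy₀.symm) ?_
    rw [← dist_eq_norm, dist_comm]
    linarith [Metric.mem_ball.1 hy₀.1, min_le_right ρ₁ (R⁻¹ / 2), inv_pos.2 hR]
  · intro x hx hseg
    have hv : ‖x - y₀‖ < R⁻¹ := by
      rw [← dist_eq_norm]
      linarith [Metric.mem_ball.1 hy₀.1, Metric.mem_ball.1 hx, dist_triangle_right x y₀ x₀,
        min_le_right ρ₁ (R⁻¹ / 2)]
    have hline : ∀ t ∈ Set.Ioo (0 : ℝ) 1, y₀ + t • (x - y₀) ∈ Ω ∩ Metric.ball x₀ ρ := fun t ht =>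
      ⟨hseg (openSegment_eq_image' ℝ y₀ x ▸ Set.mem_image_of_mem _ ht),
        (convex_ball x₀ ρ).add_smul_sub_mem hy₀.1 hx ⟨ht.1.le, ht.2.le⟩⟩
    change (taylorSeries w y₀).sum (x - y₀) = w x
    rw [taylorSeries_sum_eq hw hR (hbound y₀ hy₀.symm) (fun t ht => hbound _ (hline t ht)) hv,
      add_sub_cancel]

end CauchyEstimates

/-! ### Coordinate derivatives and test functions -/

section CoordinateDerivatives

variable {u v : Vec → ℝ} {x : Vec} {Ω : Set Vec}

theorem pd_eq_of_eventuallyEq (h : u =ᶠ[𝓝 x] v) (k : Fin 3) : pd k u x = pd k v x := by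
  simp only [pd, h.fderiv_eq]

theorem pd_congr_of_isOpen (hΩ : IsOpen Ω) (h : Set.EqOn u v Ω) (k : Fin 3) :
    Set.EqOn (pd k u) (pd k v) Ω := fun _ hx =>
  pd_eq_of_eventuallyEq (h.eventuallyEq_of_mem (hΩ.mem_nhds hx)) k

theorem pd_add (hu : DifferentiableAt ℝ u x) (hv : DifferentiableAt ℝ v x) (k : Fin 3) :
    pd k (fun y => u y + v y) x = pd k u x + pd k v x := by
  simp [pd, fderiv_fun_add hu hv]

theorem pd_neg (u : Vec → ℝ) (k : Fin 3) : pd k (-u) = -pd k u := by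
  ext x
  simp [pd, fderiv_neg]

theorem pd_sum {ι : Type*} {s : Finset ι} {u : ι → Vec → ℝ}
    (hu : ∀ i ∈ s, DifferentiableAt ℝ (u i) x) (k : Fin 3) :
    pd k (fun y => ∑ i ∈ s, u i y) x = ∑ i ∈ s, pd k (u i) x := by
  simp [pd, fderiv_fun_sum hu]

theorem pd_mul (hu : DifferentiableAt ℝ u x) (hv : DifferentiableAt ℝ v x) (k : Fin 3) :
    pd k (fun y => u y * v y) x = pd k u x * v x + u x * pd k v x := by
  simp [pd, fderiv_fun_mul hu hv]
  ring

theorem contDiffOn_pd (hΩ : IsOpen Ω) (hu : ContDiffOn ℝ (⊤ : ℕ∞) u Ω) (k : Fin 3) :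
    ContDiffOn ℝ (⊤ : ℕ∞) (pd k u) Ω :=
  (hu.fderiv_of_isOpen hΩ le_rfl).clm_apply contDiffOn_const

theorem contDiff_pd (hu : ContDiff ℝ (⊤ : ℕ∞) u) (k : Fin 3) : ContDiff ℝ (⊤ : ℕ∞) (pd k u) :=
  (hu.fderiv_right le_rfl).clm_apply contDiff_const

theorem analyticOnNhd_pd (hu : AnalyticOnNhd ℝ u Ω) (k : Fin 3) : AnalyticOnNhd ℝ (pd k u) Ω :=
  fun y hy =>
  ((ContinuousLinearMap.apply ℝ ℝ (Pi.single k 1 : Vec)).analyticAt _).comp (hu y hy).fderiv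

theorem differentiableAt_of_contDiffOn (hΩ : IsOpen Ω) (hu : ContDiffOn ℝ (⊤ : ℕ∞) u Ω)
    (hx : x ∈ Ω) : DifferentiableAt ℝ u x :=
  (hu.contDiffAt (hΩ.mem_nhds hx)).differentiableAt (by simp)

theorem pd_comm (hu : ContDiffAt ℝ (⊤ : ℕ∞) u x) (j k : Fin 3) :
    pd j (pd k u) x = pd k (pd j u) x := by
  have hfd : DifferentiableAt ℝ (fderiv ℝ u) x :=
    (hu.fderiv_right (m := (⊤ : ℕ∞)) le_rfl).differentiableAt (by simp)
  have hsymm : IsSymmSndFDerivAt ℝ u x := hu.isSymmSndFDerivAt <| by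
    simpa using WithTop.coe_le_coe.2 (le_top : (2 : ℕ∞) ≤ ⊤)
  have happly : ∀ i l : Fin 3, pd i (pd l u) x
      = fderiv ℝ (fderiv ℝ u) x (Pi.single i 1) (Pi.single l 1) := fun i l => by
    change fderiv ℝ (fun y => fderiv ℝ u y (Pi.single l 1)) x (Pi.single i 1) = _
    simp [fderiv_clm_apply hfd (differentiableAt_const _)]
  rw [happly, happly, hsymm.eq]

theorem pd_pd_mul (hΩ : IsOpen Ω) (hu : ContDiffOn ℝ (⊤ : ℕ∞) u Ω)
    (hv : ContDiffOn ℝ (⊤ : ℕ∞) v Ω) (hx : x ∈ Ω) (j k : Fin 3) :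
    pd j (pd k fun y => u y * v y) x = pd j (pd k u) x * v x + pd k u x * pd j v x
      + (pd j u x * pd k v x + u x * pd j (pd k v) x) := by
  have hud := fun y (hy : y ∈ Ω) => differentiableAt_of_contDiffOn hΩ hu hy
  have hvd := fun y (hy : y ∈ Ω) => differentiableAt_of_contDiffOn hΩ hv hy
  have hpud := differentiableAt_of_contDiffOn hΩ (contDiffOn_pd hΩ hu k) hx
  have hpvd := differentiableAt_of_contDiffOn hΩ (contDiffOn_pd hΩ hv k) hx
  rw [pd_congr_of_isOpen hΩ (fun y hy => pd_mul (hud y hy) (hvd y hy) k) j hx,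
    pd_add (hpud.fun_mul (hvd x hx)) ((hud x hx).fun_mul hpvd), pd_mul hpud (hvd x hx),
    pd_mul (hud x hx) hpvd]

theorem pd_eq_zero_of_notMem_tsupport (hx : x ∉ tsupport u) (k : Fin 3) : pd k u x = 0 := by
  rw [pd_eq_of_eventuallyEq (notMem_tsupport_iff_eventuallyEq.1 hx) k]
  simp [pd]

theorem tsupport_pd_subset (u : Vec → ℝ) (k : Fin 3) : tsupport (pd k u) ⊆ tsupport u :=
  closure_minimal (fun _ hx => by_contra fun hc => hx (pd_eq_zero_of_notMem_tsupport hc k))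
    (isClosed_tsupport u)

end CoordinateDerivatives

/-- Smooth functions on `ℝ³` with compact support in `Ω`, unbundled so that they can be multiplied
by functions that are smooth on `Ω` only. -/
structure IsTestFunction (Ω : Set Vec) (φ : Vec → ℝ) : Prop where
  contDiff : ContDiff ℝ (⊤ : ℕ∞) φ
  hasCompactSupport : HasCompactSupport φ
  tsupport_subset : tsupport φ ⊆ Ω

namespace IsTestFunction

variable {Ω : Set Vec} {φ u : Vec → ℝ}

theorem pd (hφ : IsTestFunction Ω φ) (k : Fin 3) : IsTestFunction Ω (pd k φ) where
  contDiff := contDiff_pd hφ.contDiff k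
  hasCompactSupport :=
    hφ.hasCompactSupport.of_isClosed_subset (isClosed_tsupport _) (tsupport_pd_subset φ k)
  tsupport_subset := (tsupport_pd_subset φ k).trans hφ.tsupport_subset

theorem mul_contDiffOn (hφ : IsTestFunction Ω φ) (hΩ : IsOpen Ω)
    (hu : ContDiffOn ℝ (⊤ : ℕ∞) u Ω) : IsTestFunction Ω (fun x => φ x * u x) where
  contDiff := by
    rw [contDiff_iff_contDiffAt]
    intro x
    by_cases hx : x ∈ tsupport φ
    · exact hφ.contDiff.contDiffAt.mul
        (hu.contDiffAt (hΩ.mem_nhds (hφ.tsupport_subset hx)))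
    · refine (contDiffAt_const (c := (0 : ℝ))).congr_of_eventuallyEq ?_
      filter_upwards [notMem_tsupport_iff_eventuallyEq.1 hx] with y hy
      simp [hy]
  hasCompactSupport := hφ.hasCompactSupport.mul_right
  tsupport_subset := tsupport_mul_subset_left.trans hφ.tsupport_subset

theorem integrable (hφ : IsTestFunction Ω φ) : Integrable φ :=
  hφ.contDiff.continuous.integrable_of_hasCompactSupport hφ.hasCompactSupport

theorem integral_pd (hφ : IsTestFunction Ω φ) (k : Fin 3) : ∫ x, _root_.pd k φ x = 0 := by
  simpa [_root_.pd] using integral_mul_fderiv_eq_neg_fderiv_mul_of_integrable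
    (μ := (volume : Measure Vec)) (f := fun _ => (1 : ℝ)) (g := φ) (v := Pi.single k 1)
    (by simp) ((hφ.pd k).integrable.congr (.of_forall fun _ => (one_mul _).symm))
    (by simpa using hφ.integrable)
    (fun x _ => differentiableAt_const _)
    (fun x _ => (hφ.contDiff.differentiable (by simp)).differentiableAt)

theorem setIntegral_eq_integral (hφ : IsTestFunction Ω φ) : ∫ x in Ω, φ x = ∫ x, φ x :=
  setIntegral_eq_integral_of_forall_compl_eq_zero fun _ hx =>
    image_eq_zero_of_notMem_tsupport fun h => hx (hφ.tsupport_subset h)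

theorem integral_pd_mul (hφ : IsTestFunction Ω φ) (hΩ : IsOpen Ω)
    (hu : ContDiffOn ℝ (⊤ : ℕ∞) u Ω) (k : Fin 3) :
    ∫ x in Ω, _root_.pd k φ x * u x = -∫ x in Ω, φ x * _root_.pd k u x := by
  have hprod := hφ.mul_contDiffOn hΩ hu
  have hleft := (hφ.pd k).mul_contDiffOn hΩ hu
  have hright := hφ.mul_contDiffOn hΩ (contDiffOn_pd hΩ hu k)
  have hleibniz : ∀ x ∈ Ω, _root_.pd k (fun y => φ y * u y) x
      = _root_.pd k φ x * u x + φ x * _root_.pd k u x := fun x hx =>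
    pd_mul (hφ.contDiff.differentiable (by simp)).differentiableAt
      (differentiableAt_of_contDiffOn hΩ hu hx) k
  have hzero := (hprod.pd k).setIntegral_eq_integral.trans (hprod.integral_pd k)
  rw [setIntegral_congr_fun hΩ.measurableSet hleibniz,
    integral_add hleft.integrable.integrableOn hright.integrable.integrableOn] at hzero
  linarith

end IsTestFunction

/-- `v` is the transpose on `Ω`, applied to the constant `1`, of the linear differential operator
`φ ↦ L (φ, ·)`, that is `∫_Ω Lφ = ∫_Ω φ v` for all test functions. The coefficients of `L` usually
carry a second, fixed function, so that `v` is a differential expression in that function. -/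
structure HasTranspose (Ω : Set Vec) (L : (Vec → ℝ) × Vec → ℝ) (v : Vec → ℝ) : Prop where
  contDiffOn : ContDiffOn ℝ (⊤ : ℕ∞) v Ω
  integrableOn : ∀ φ, IsTestFunction Ω φ → IntegrableOn (fun x => L (φ, x)) Ω
  integral_eq : ∀ φ, IsTestFunction Ω φ → ∫ x in Ω, L (φ, x) = ∫ x in Ω, φ x * v x

namespace HasTranspose

variable {Ω : Set Vec} {L L' : (Vec → ℝ) × Vec → ℝ} {v v' : Vec → ℝ}

theorem of_mul (hΩ : IsOpen Ω) (hv : ContDiffOn ℝ (⊤ : ℕ∞) v Ω) :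
    HasTranspose Ω (fun s => s.1 s.2 * v s.2) v where
  contDiffOn := hv
  integrableOn _ hφ := (hφ.mul_contDiffOn hΩ hv).integrable.integrableOn
  integral_eq _ _ := rfl

theorem comp_pd (hΩ : IsOpen Ω) (h : HasTranspose Ω L v) (k : Fin 3) :
    HasTranspose Ω (fun s => L (pd k s.1, s.2)) (-pd k v) where
  contDiffOn := (contDiffOn_pd hΩ h.contDiffOn k).neg
  integrableOn φ hφ := h.integrableOn _ (hφ.pd k)
  integral_eq φ hφ := by
    simp only [h.integral_eq _ (hφ.pd k), hφ.integral_pd_mul hΩ h.contDiffOn, Pi.neg_apply,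
      mul_neg, integral_neg]

theorem add (hΩ : IsOpen Ω) (h : HasTranspose Ω L v) (h' : HasTranspose Ω L' v') :
    HasTranspose Ω (L + L') (v + v') where
  contDiffOn := h.contDiffOn.add h'.contDiffOn
  integrableOn φ hφ := (h.integrableOn φ hφ).add (h'.integrableOn φ hφ)
  integral_eq φ hφ := by
    simp only [Pi.add_apply, mul_add]
    rw [integral_add (h.integrableOn φ hφ) (h'.integrableOn φ hφ), h.integral_eq φ hφ,
      h'.integral_eq φ hφ, integral_add (hφ.mul_contDiffOn hΩ h.contDiffOn).integrable.integrableOn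
        (hφ.mul_contDiffOn hΩ h'.contDiffOn).integrable.integrableOn]

theorem zero : HasTranspose Ω 0 0 where
  contDiffOn := contDiffOn_const
  integrableOn _ _ := integrableOn_zero
  integral_eq _ _ := by simp

theorem const_smul (h : HasTranspose Ω L v) (c : ℝ) : HasTranspose Ω (c • L) (c • v) where
  contDiffOn := contDiffOn_const.smul h.contDiffOn
  integrableOn φ hφ := (h.integrableOn φ hφ).smul c
  integral_eq φ hφ := by
    simp only [Pi.smul_apply, smul_eq_mul, mul_left_comm _ c, integral_const_mul,
      h.integral_eq φ hφ]

theorem congr (hΩ : IsOpen Ω) (h : HasTranspose Ω L v)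
    (hL : ∀ φ, ContDiff ℝ (⊤ : ℕ∞) φ → ∀ x ∈ Ω, L' (φ, x) = L (φ, x)) : HasTranspose Ω L' v where
  contDiffOn := h.contDiffOn
  integrableOn φ hφ := (h.integrableOn φ hφ).congr_fun
    (fun x hx => (hL φ hφ.contDiff x hx).symm) hΩ.measurableSet
  integral_eq φ hφ := by
    rw [← h.integral_eq φ hφ]
    exact setIntegral_congr_fun hΩ.measurableSet (hL φ hφ.contDiff)

theorem eqOn_zero (hΩ : IsOpen Ω) (h : HasTranspose Ω L v)
    (hL : ∀ φ, IsTestFunction Ω φ → ∫ x in Ω, L (φ, x) = 0) : Set.EqOn v 0 Ω := by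
  have hv := h.contDiffOn.continuousOn
  have hae : ∀ᵐ x : Vec, x ∈ Ω → v x = 0 := by
    refine hΩ.ae_eq_zero_of_integral_contDiff_smul_eq_zero
      (hv.locallyIntegrableOn hΩ.measurableSet) fun φ hφ hφc hφΩ => ?_
    have hφt : IsTestFunction Ω φ := ⟨hφ, hφc, hφΩ⟩
    simp only [smul_eq_mul]
    rw [← (hφt.mul_contDiffOn hΩ h.contDiffOn).setIntegral_eq_integral, ← h.integral_eq φ hφt,
      hL φ hφt]
  exact Measure.eqOn_open_of_ae_eq ((ae_restrict_iff' hΩ.measurableSet).2 hae) hΩ hv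
    continuousOn_const

end HasTranspose

/-! ### Jets and operators modulo analytic coefficients -/

section AnalyticSpan

variable {S : Type*} {ι ι' : Type*} [Fintype ι] [Fintype ι'] {E : Type*} [NormedAddCommGroup E]
  [NormedSpace ℝ E] {V : Set E} {pt : S → E} {Z : Set S}

/-- The functions on `S` that agree on `Z` with a linear combination of the `w i` whose
coefficients are analytic on `V`, evaluated at `pt s`. For `S = E` and `pt = id` this is the module
generated by the functions `w i`; for `S` consisting of pairs (test function, point) it is a module
of linear differential operators. -/
def analyticSpan (V : Set E) (pt : S → E) (Z : Set S) (w : ι → S → ℝ) : Submodule ℝ (S → ℝ) where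
  carrier := {u | ∃ a : ι → E → ℝ, (∀ i, AnalyticOnNhd ℝ (a i) V) ∧
    ∀ s ∈ Z, u s = ∑ i, a i (pt s) * w i s}
  zero_mem' := ⟨fun _ _ => 0, fun _ => analyticOnNhd_const, fun _ _ => by simp⟩
  add_mem' := by
    rintro u v ⟨a, ha, hu⟩ ⟨b, hb, hv⟩
    refine ⟨fun i x => a i x + b i x, fun i => (ha i).add (hb i), fun s hs => ?_⟩
    simp only [Pi.add_apply, hu s hs, hv s hs, add_mul, sum_add_distrib]
  smul_mem' := by
    rintro c u ⟨a, ha, hu⟩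
    refine ⟨fun i x => c * a i x, fun i => analyticOnNhd_const.mul (ha i), fun s hs => ?_⟩
    simp only [Pi.smul_apply, smul_eq_mul, hu s hs, mul_sum, mul_assoc]

variable {w : ι → S → ℝ} {w' : ι' → S → ℝ} {u v : S → ℝ} {a : E → ℝ}

theorem mem_analyticSpan_congr (h : Set.EqOn u v Z) (hv : v ∈ analyticSpan V pt Z w) :
    u ∈ analyticSpan V pt Z w := by
  obtain ⟨a, ha, hav⟩ := hv
  exact ⟨a, ha, fun s hs => (h hs).trans (hav s hs)⟩

theorem mul_mem_analyticSpan (ha : AnalyticOnNhd ℝ a V) (hu : u ∈ analyticSpan V pt Z w) :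
    (fun s => a (pt s) * u s) ∈ analyticSpan V pt Z w := by
  obtain ⟨b, hb, hbu⟩ := hu
  refine ⟨fun i x => a x * b i x, fun i => ha.mul (hb i), fun s hs => ?_⟩
  simp only [hbu s hs, mul_sum, mul_assoc]

theorem mem_analyticSpan_of_mul_mem (ha : AnalyticOnNhd ℝ a V) (ha₀ : ∀ x ∈ V, a x ≠ 0)
    (hpt : Set.MapsTo pt Z V) (hu : (fun s => a (pt s) * u s) ∈ analyticSpan V pt Z w) :
    u ∈ analyticSpan V pt Z w :=
  mem_analyticSpan_congr (fun _ hs => (inv_mul_cancel_left₀ (ha₀ _ (hpt hs)) _).symm)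
    (mul_mem_analyticSpan (ha.inv ha₀) hu)

theorem analyticSpan_mono {V' : Set E} {Z' : Set S} (hV : V' ⊆ V) (hZ : Z' ⊆ Z) :
    analyticSpan V pt Z w ≤ analyticSpan V' pt Z' w := by
  rintro u ⟨a, ha, hau⟩
  exact ⟨a, fun i => (ha i).mono hV, fun s hs => hau s (hZ hs)⟩

theorem generator_mem_analyticSpan (i : ι) : w i ∈ analyticSpan V pt Z w := by
  classical
  exact ⟨fun j _ => if j = i then 1 else 0, fun _ => analyticOnNhd_const, fun _ _ => by simp⟩

theorem fun_sum_mem_analyticSpan {κ : Type*} {t : Finset κ} {u : κ → S → ℝ}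
    (hu : ∀ k ∈ t, u k ∈ analyticSpan V pt Z w) :
    (fun s => ∑ k ∈ t, u k s) ∈ analyticSpan V pt Z w := by
  simpa only [← Finset.sum_apply] using Submodule.sum_mem _ hu

theorem analyticSpan_le (h : ∀ i, w i ∈ analyticSpan V pt Z w') :
    analyticSpan V pt Z w ≤ analyticSpan V pt Z w' := by
  rintro u ⟨a, ha, hu⟩
  exact mem_analyticSpan_congr hu
    (fun_sum_mem_analyticSpan fun i _ => mul_mem_analyticSpan (ha i) (h i))

end AnalyticSpan

section Jets

variable {ι : Type*} {V Ω : Set Vec} {w : ι → Vec → ℝ} {u Q : Vec → ℝ}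

/-- The components of the first jet of `u`: `none` is `u` itself and `some k` is `∂ₖu`. -/
def jet1 (o : Option (Fin 3)) (u : Vec → ℝ) : Vec → ℝ := o.elim u fun k => pd k u

/-- The first prolongation of a family of functions: all components of their first jets. -/
def prolong (w : ι → Vec → ℝ) (q : Option (Fin 3) × ι) : Vec → ℝ := jet1 q.1 (w q.2)

theorem contDiffOn_prolong (hΩ : IsOpen Ω) (hw : ∀ i, ContDiffOn ℝ (⊤ : ℕ∞) (w i) Ω) :
    ∀ q, ContDiffOn ℝ (⊤ : ℕ∞) (prolong w q) Ω
  | (none, i) => hw i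
  | (some k, i) => contDiffOn_pd hΩ (hw i) k

variable [Fintype ι]

theorem analyticSpan_le_prolong :
    analyticSpan V id Ω w ≤ analyticSpan V id Ω (prolong w) :=
  analyticSpan_le fun i => generator_mem_analyticSpan (w := prolong w) (none, i)

theorem contDiffOn_of_mem_analyticSpan (hΩV : Ω ⊆ V)
    (hw : ∀ i, ContDiffOn ℝ (⊤ : ℕ∞) (w i) Ω) (hu : u ∈ analyticSpan V id Ω w) :
    ContDiffOn ℝ (⊤ : ℕ∞) u Ω := by
  obtain ⟨a, ha, hau⟩ := hu
  exact (ContDiffOn.sum fun i _ =>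
    (((ha i).mono hΩV).contDiffOn_of_completeSpace).mul (hw i)).congr hau

theorem pd_mem_analyticSpan_prolong (hΩ : IsOpen Ω) (hΩV : Ω ⊆ V)
    (hw : ∀ i, ContDiffOn ℝ (⊤ : ℕ∞) (w i) Ω) (hu : u ∈ analyticSpan V id Ω w) (k : Fin 3) :
    pd k u ∈ analyticSpan V id Ω (prolong w) := by
  obtain ⟨a, ha, hau⟩ := hu
  have hpd : Set.EqOn (pd k u)
      (fun x => ∑ i, (pd k (a i) x * w i x + a i x * pd k (w i) x)) Ω := fun x hx => by
    have hax := fun i => (ha i x (hΩV hx)).differentiableAt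
    have hwx := fun i => differentiableAt_of_contDiffOn hΩ (hw i) hx
    rw [pd_congr_of_isOpen hΩ hau k hx]
    simp only [id_eq]
    rw [pd_sum fun i _ => (hax i).fun_mul (hwx i)]
    exact sum_congr rfl fun i _ => pd_mul (hax i) (hwx i) k
  refine mem_analyticSpan_congr hpd (fun_sum_mem_analyticSpan fun i _ => add_mem ?_ ?_)
  · exact mul_mem_analyticSpan (analyticOnNhd_pd (ha i) k)
      (generator_mem_analyticSpan (w := prolong w) (none, i))
  · exact mul_mem_analyticSpan (ha i) (generator_mem_analyticSpan (w := prolong w) (some k, i))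

theorem pd_mul_sub_mem_analyticSpan (hΩ : IsOpen Ω) (hΩV : Ω ⊆ V)
    (hw : ∀ i, ContDiffOn ℝ (⊤ : ℕ∞) (w i) Ω) (hQ : AnalyticOnNhd ℝ Q V)
    (hu : u ∈ analyticSpan V id Ω w) (k : Fin 3) :
    (fun x => pd k (fun y => Q y * u y) x - Q x * pd k u x) ∈ analyticSpan V id Ω w := by
  refine mem_analyticSpan_congr (fun x hx => ?_)
    (mul_mem_analyticSpan (analyticOnNhd_pd hQ k) hu)
  have hux := contDiffOn_of_mem_analyticSpan hΩV hw hu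
  simp only [pd_mul (hQ x (hΩV hx)).differentiableAt (differentiableAt_of_contDiffOn hΩ hux hx),
    id_eq, add_sub_cancel_right]

theorem pd_pd_mul_sub_mem_analyticSpan (hΩ : IsOpen Ω) (hΩV : Ω ⊆ V)
    (hw : ∀ i, ContDiffOn ℝ (⊤ : ℕ∞) (w i) Ω) (hQ : AnalyticOnNhd ℝ Q V)
    (hu : u ∈ analyticSpan V id Ω w) (j k : Fin 3) :
    (fun x => pd j (pd k fun y => Q y * u y) x - Q x * pd j (pd k u) x)
      ∈ analyticSpan V id Ω (prolong w) := by
  have hpu := pd_mem_analyticSpan_prolong hΩ hΩV hw hu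
  have hpQ := analyticOnNhd_pd hQ
  refine mem_analyticSpan_congr (fun x hx => ?_)
    (add_mem (mul_mem_analyticSpan (analyticOnNhd_pd (hpQ k) j) (analyticSpan_le_prolong hu))
      (add_mem (mul_mem_analyticSpan (hpQ k) (hpu j)) (mul_mem_analyticSpan (hpQ j) (hpu k))))
  simp only [pd_pd_mul hΩ (hQ.mono hΩV).contDiffOn_of_completeSpace
    (contDiffOn_of_mem_analyticSpan hΩV hw hu) hx, Pi.add_apply, id_eq]
  ring

theorem exists_clm_system_of_pd_mem_analyticSpan
    (hw : ∀ x ∈ Ω, ∀ i, DifferentiableAt ℝ (w i) x)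
    (hclosed : ∀ k i, pd k (w i) ∈ analyticSpan V id Ω w) :
    ∃ A : Vec → (ι → ℝ) →L[ℝ] Vec →L[ℝ] ι → ℝ, AnalyticOnNhd ℝ A V ∧
      ∀ x ∈ Ω, fderiv ℝ (fun y i => w i y) x = A x fun i => w i x := by
  classical
  choose a ha haw using hclosed
  let T (k : Fin 3) (i j : ι) : (ι → ℝ) →L[ℝ] Vec →L[ℝ] ι → ℝ :=
    (ContinuousLinearMap.proj (R := ℝ) (φ := fun _ : ι => ℝ) j).smulRight
      ((ContinuousLinearMap.proj (R := ℝ) (φ := fun _ : Fin 3 => ℝ) k).smulRight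
        (Pi.single i 1 : ι → ℝ))
  refine ⟨fun x => ∑ k, ∑ i, ∑ j, a k i j x • T k i j, fun x hx => ?_, fun x hx => ?_⟩
  · exact Finset.analyticAt_fun_sum _ fun k _ => Finset.analyticAt_fun_sum _ fun i _ =>
      Finset.analyticAt_fun_sum _ fun j _ =>
        (ContinuousLinearMap.analyticAt
          (ContinuousLinearMap.smulRight (1 : ℝ →L[ℝ] ℝ) (T k i j)) _).comp (ha k i j x hx)
  · refine ContinuousLinearMap.coe_injective ((Pi.basisFun ℝ (Fin 3)).ext fun k => ?_)
    ext i
    have hcoord : fderiv ℝ (fun y i => w i y) x (Pi.single k 1) i = pd k (w i) x := by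
      rw [fderiv_pi (hw x hx)]
      rfl
    simp [hcoord, haw k i x hx, T, Pi.single_apply, ite_apply, Finset.sum_apply, mul_comm]

end Jets

section Operators

variable {ι : Type*} [Fintype ι] {V Ω : Set Vec} {w : ι → Vec → ℝ} {u v τ : Vec → ℝ}
  {L R : (Vec → ℝ) × Vec → ℝ}

/-- Linear differential operators of order at most one with coefficients analytic on `V`, encoded
as functions of a test function and a point. -/
def firstOrder (V : Set Vec) : Submodule ℝ ((Vec → ℝ) × Vec → ℝ) :=
  analyticSpan V Prod.snd ({φ | ContDiff ℝ (⊤ : ℕ∞) φ} ×ˢ V) fun o s => jet1 o s.1 s.2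

theorem mul_self_mem_firstOrder (hτ : AnalyticOnNhd ℝ τ V) :
    (fun s : (Vec → ℝ) × Vec => s.1 s.2 * τ s.2) ∈ firstOrder V :=
  mem_analyticSpan_congr (fun _ _ => mul_comm _ _)
    (mul_mem_analyticSpan hτ (generator_mem_analyticSpan (none : Option (Fin 3))))

theorem mul_pd_mem_firstOrder (hτ : AnalyticOnNhd ℝ τ V) (k : Fin 3) :
    (fun s : (Vec → ℝ) × Vec => τ s.2 * pd k s.1 s.2) ∈ firstOrder V :=
  mul_mem_analyticSpan hτ (generator_mem_analyticSpan (some k))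

theorem pd_mul_mem_firstOrder (hτ : AnalyticOnNhd ℝ τ V) (k : Fin 3) :
    (fun s : (Vec → ℝ) × Vec => pd k (fun y => s.1 y * τ y) s.2) ∈ firstOrder V := by
  refine mem_analyticSpan_congr (fun s hs => ?_)
    (add_mem (mul_pd_mem_firstOrder hτ k) (mul_self_mem_firstOrder (analyticOnNhd_pd hτ k)))
  have hφ : ContDiff ℝ (⊤ : ℕ∞) s.1 := hs.1
  rw [pd_mul (hφ.differentiable (by simp)).differentiableAt (hτ _ hs.2).differentiableAt,
    mul_comm (pd k s.1 s.2)]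
  rfl

theorem pd_pd_mul_sub_mem_firstOrder (hV : IsOpen V) (hτ : AnalyticOnNhd ℝ τ V) (j k : Fin 3) :
    (fun s : (Vec → ℝ) × Vec =>
      pd j (pd k fun y => s.1 y * τ y) s.2 - τ s.2 * pd j (pd k s.1) s.2) ∈ firstOrder V := by
  have hpτ := analyticOnNhd_pd hτ
  refine mem_analyticSpan_congr (fun s hs => ?_)
    (add_mem (mul_self_mem_firstOrder (analyticOnNhd_pd (hpτ k) j))
      (add_mem (mul_pd_mem_firstOrder (hpτ k) j) (mul_pd_mem_firstOrder (hpτ j) k)))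
  have hφ : ContDiff ℝ (⊤ : ℕ∞) s.1 := hs.1
  simp only [pd_pd_mul hV hφ.contDiffOn hτ.contDiffOn_of_completeSpace hs.2, Pi.add_apply]
  ring

/-- The operators on test functions that have a transpose on `Ω` lying in `T`. -/
def transposableInto (hΩ : IsOpen Ω) (T : Submodule ℝ (Vec → ℝ)) :
    Submodule ℝ ((Vec → ℝ) × Vec → ℝ) where
  carrier := {L | ∃ v ∈ T, HasTranspose Ω L v}
  zero_mem' := ⟨0, T.zero_mem, .zero⟩
  add_mem' := fun ⟨v, hv, hL⟩ ⟨v', hv', hL'⟩ => ⟨v + v', T.add_mem hv hv', hL.add hΩ hL'⟩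
  smul_mem' := fun c _ ⟨v, hv, hL⟩ => ⟨c • v, T.smul_mem c hv, hL.const_smul c⟩

theorem mul_mem_transposableInto (hΩ : IsOpen Ω) (hΩV : Ω ⊆ V)
    (hw : ∀ i, ContDiffOn ℝ (⊤ : ℕ∞) (w i) Ω) (hu : u ∈ analyticSpan V id Ω w) :
    (fun s : (Vec → ℝ) × Vec => s.1 s.2 * u s.2) ∈ transposableInto hΩ (analyticSpan V id Ω w) :=
  ⟨u, hu, .of_mul hΩ (contDiffOn_of_mem_analyticSpan hΩV hw hu)⟩

theorem firstOrder_mul_mem_transposableInto (hΩ : IsOpen Ω) (hΩV : Ω ⊆ V)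
    (hw : ∀ i, ContDiffOn ℝ (⊤ : ℕ∞) (w i) Ω) (hR : R ∈ firstOrder V)
    (hu : u ∈ analyticSpan V id Ω w) :
    (fun s => R s * u s.2) ∈ transposableInto hΩ (analyticSpan V id Ω (prolong w)) := by
  obtain ⟨a, ha, haR⟩ := hR
  have hau := fun o => mul_mem_analyticSpan (ha o) hu
  have hterm : ∀ o, (fun s : (Vec → ℝ) × Vec => jet1 o s.1 s.2 * (a o s.2 * u s.2))
      ∈ transposableInto hΩ (analyticSpan V id Ω (prolong w))
    | none => mul_mem_transposableInto hΩ hΩV (contDiffOn_prolong hΩ hw)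
        (analyticSpan_le_prolong (hau none))
    | some k => ⟨_, neg_mem (pd_mem_analyticSpan_prolong hΩ hΩV hw (hau (some k)) k),
        (HasTranspose.of_mul hΩ (contDiffOn_of_mem_analyticSpan hΩV hw (hau (some k)))).comp_pd
          hΩ k⟩
  obtain ⟨v, hv, hLv⟩ := sum_mem fun o (_ : o ∈ univ) => hterm o
  refine ⟨v, hv, hLv.congr hΩ fun φ hφ x hx => ?_⟩
  rw [haR (φ, x) ⟨hφ, hΩV hx⟩, sum_mul, Finset.sum_apply]
  exact sum_congr rfl fun o _ => by ring

theorem HasTranspose.mem_analyticSpan_of_integral_eq_zero (hΩ : IsOpen Ω)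
    (hL : HasTranspose Ω L v) (hR : R ∈ transposableInto hΩ (analyticSpan V id Ω w))
    (hzero : ∀ φ, IsTestFunction Ω φ → ∫ x in Ω, (L (φ, x) + R (φ, x)) = 0) :
    v ∈ analyticSpan V id Ω w := by
  obtain ⟨v', hv', hRv'⟩ := hR
  refine mem_analyticSpan_congr (fun x hx => ?_) (neg_mem hv')
  exact eq_neg_of_add_eq_zero_left ((hL.add hΩ hRv').eqOn_zero hΩ hzero hx)

end Operators

/-! ### Metrics with analytic components -/

section MatrixInverse

variable {E : Type*} [NormedAddCommGroup E] [NormedSpace ℝ E] {V : Set E}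
  {n : Type*} [Fintype n] [DecidableEq n] {M : E → Matrix n n ℝ}

theorem analyticOnNhd_det (hM : ∀ i j, AnalyticOnNhd ℝ (fun x => M x i j) V) :
    AnalyticOnNhd ℝ (fun x => (M x).det) V := by
  simp only [Matrix.det_apply']
  exact Finset.analyticOnNhd_fun_sum _ fun σ _ => analyticOnNhd_const.mul
    (Finset.analyticOnNhd_fun_prod _ fun i _ => hM (σ i) i)

theorem analyticOnNhd_inv_apply (hM : ∀ i j, AnalyticOnNhd ℝ (fun x => M x i j) V)
    (hdet : ∀ x ∈ V, (M x).det ≠ 0) (i j : n) : AnalyticOnNhd ℝ (fun x => (M x)⁻¹ i j) V := by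
  simp only [Matrix.inv_def, Matrix.smul_apply, Ring.inverse_eq_inv', smul_eq_mul,
    Matrix.adjugate_apply]
  refine ((analyticOnNhd_det hM).inv hdet).mul (analyticOnNhd_det fun k l => ?_)
  by_cases hkj : k = j
  · simpa only [hkj, Matrix.updateRow_self] using analyticOnNhd_const
  · simpa only [Matrix.updateRow_ne hkj] using hM k l

end MatrixInverse

/-- `g` is symmetric and on the open set `V` its components are analytic and its determinant is
positive, which is all that the local algebra of the metric requires of positivity. -/
structure AnalyticMetricOn (V : Set Vec) (g : Vec → Mtx) : Prop where
  isOpen : IsOpen V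
  analytic : ∀ i j, AnalyticOnNhd ℝ (fun x => g x i j) V
  symm : ∀ x i j, g x i j = g x j i
  det_pos : ∀ x ∈ V, 0 < (Matrix.of (g x)).det

namespace AnalyticMetricOn

variable {V : Set Vec} {g T : Vec → Mtx} {x : Vec}

theorem analyticOnNhd_minv (G : AnalyticMetricOn V g) (i j : Fin 3) :
    AnalyticOnNhd ℝ (fun x => minv (g x) i j) V :=
  analyticOnNhd_inv_apply G.analytic (fun x hx => (G.det_pos x hx).ne') i j

theorem analyticOnNhd_dens (G : AnalyticMetricOn V g) : AnalyticOnNhd ℝ (dens g) V := fun x hx =>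
  AnalyticAt.comp (f := fun x => (Matrix.of (g x)).det)
    (Real.contDiffAt_sqrt (G.det_pos x hx).ne').analyticAt (analyticOnNhd_det G.analytic x hx)

theorem dens_pos (G : AnalyticMetricOn V g) (hx : x ∈ V) : 0 < dens g x :=
  Real.sqrt_pos.2 (G.det_pos x hx)

theorem analyticOnNhd_Gam (G : AnalyticMetricOn V g) (k i j : Fin 3) :
    AnalyticOnNhd ℝ (Gam g k i j) V :=
  analyticOnNhd_const.mul <| Finset.analyticOnNhd_fun_sum _ fun l _ =>
    (G.analyticOnNhd_minv k l).mul <| ((analyticOnNhd_pd (G.analytic l j) i).add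
      (analyticOnNhd_pd (G.analytic l i) j)).sub (analyticOnNhd_pd (G.analytic i j) l)

theorem analyticOnNhd_RicT (G : AnalyticMetricOn V g) (i j : Fin 3) :
    AnalyticOnNhd ℝ (RicT g i j) V :=
  have hΓ := G.analyticOnNhd_Gam
  ((Finset.analyticOnNhd_fun_sum _ fun k _ => analyticOnNhd_pd (hΓ k i j) k).sub
    (Finset.analyticOnNhd_fun_sum _ fun k _ => analyticOnNhd_pd (hΓ k k i) j)).add
    (Finset.analyticOnNhd_fun_sum _ fun k _ => Finset.analyticOnNhd_fun_sum _ fun l _ =>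
      ((hΓ k k l).mul (hΓ l i j)).sub ((hΓ k j l).mul (hΓ l k i)))

theorem analyticOnNhd_trT (G : AnalyticMetricOn V g)
    (hT : ∀ i j, AnalyticOnNhd ℝ (fun x => T x i j) V) : AnalyticOnNhd ℝ (trT g T) V :=
  Finset.analyticOnNhd_fun_sum _ fun i _ => Finset.analyticOnNhd_fun_sum _ fun j _ =>
    (G.analyticOnNhd_minv i j).mul (hT i j)

theorem analyticOnNhd_raise2 (G : AnalyticMetricOn V g)
    (hT : ∀ i j, AnalyticOnNhd ℝ (fun x => T x i j) V) (i j : Fin 3) :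
    AnalyticOnNhd ℝ (fun x => raise2 g T x i j) V :=
  Finset.analyticOnNhd_fun_sum _ fun a _ => Finset.analyticOnNhd_fun_sum _ fun b _ =>
    ((G.analyticOnNhd_minv i a).mul (G.analyticOnNhd_minv j b)).mul (hT a b)

theorem analyticOnNhd_covD (G : AnalyticMetricOn V g)
    (hT : ∀ i j, AnalyticOnNhd ℝ (fun x => T x i j) V) (k i j : Fin 3) :
    AnalyticOnNhd ℝ (covD g T k i j) V :=
  (analyticOnNhd_pd (hT i j) k).sub <| Finset.analyticOnNhd_fun_sum _ fun l _ =>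
    ((G.analyticOnNhd_Gam l k i).mul (hT l j)).add ((G.analyticOnNhd_Gam l k j).mul (hT i l))

theorem analyticOnNhd_divT (G : AnalyticMetricOn V g)
    (hT : ∀ i j, AnalyticOnNhd ℝ (fun x => T x i j) V) (i : Fin 3) :
    AnalyticOnNhd ℝ (divT g T i) V :=
  Finset.analyticOnNhd_fun_sum _ fun k _ => Finset.analyticOnNhd_fun_sum _ fun l _ =>
    (G.analyticOnNhd_minv k l).mul (G.analyticOnNhd_covD hT k l i)

theorem minv_symm (G : AnalyticMetricOn V g) (i j : Fin 3) :
    minv (g x) i j = minv (g x) j i := by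
  have hsymm : (Matrix.of (g x)).IsSymm := Matrix.IsSymm.ext fun i j => G.symm x j i
  exact hsymm.inv.apply j i

theorem sum_minv_mul (G : AnalyticMetricOn V g) (hx : x ∈ V) (i k : Fin 3) :
    ∑ j, minv (g x) i j * g x j k = if i = k then 1 else 0 := by
  have hinv := Matrix.nonsing_inv_mul (Matrix.of (g x)) (G.det_pos x hx).ne'.isUnit
  rw [← Matrix.one_apply, ← hinv, Matrix.mul_apply]
  rfl

end AnalyticMetricOn

section TestTensors

variable {V : Set Vec} {g : Vec → Mtx} {x : Vec}

/-- The symmetric tensor whose contravariant components are `δᶜₐδᵈ_b + δᶜ_bδᵈₐ`. -/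
def symProd (g : Vec → Mtx) (a b : Fin 3) : Vec → Mtx := fun x i j =>
  g x i a * g x j b + g x i b * g x j a

/-- The trace reversal of `symProd`, so that `div div h - Δ tr h` applied to
`h = φ • hessianTensor g a b` has principal part `2 ∂ₐ∂_b φ`. -/
def hessianTensor (g : Vec → Mtx) (a b : Fin 3) : Vec → Mtx := fun x i j =>
  symProd g a b x i j - g x a b * g x i j

theorem contDiff_symProd (hg : ContDiff ℝ (⊤ : ℕ∞) g) (a b : Fin 3) :
    ContDiff ℝ (⊤ : ℕ∞) (symProd g a b) := by
  unfold symProd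
  fun_prop

theorem contDiff_hessianTensor (hg : ContDiff ℝ (⊤ : ℕ∞) g) (a b : Fin 3) :
    ContDiff ℝ (⊤ : ℕ∞) (hessianTensor g a b) := by
  unfold hessianTensor symProd
  fun_prop

theorem symProd_symm (a b i j : Fin 3) : symProd g a b x i j = symProd g a b x j i := by
  simp only [symProd]
  ring

namespace AnalyticMetricOn

theorem hessianTensor_symm (G : AnalyticMetricOn V g) (a b i j : Fin 3) :
    hessianTensor g a b x i j = hessianTensor g a b x j i := by
  simp only [hessianTensor, symProd_symm a b i j, G.symm x i j]

theorem analyticOnNhd_symProd (G : AnalyticMetricOn V g) (a b i j : Fin 3) :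
    AnalyticOnNhd ℝ (fun x => symProd g a b x i j) V :=
  ((G.analytic i a).mul (G.analytic j b)).add ((G.analytic i b).mul (G.analytic j a))

theorem analyticOnNhd_hessianTensor (G : AnalyticMetricOn V g) (a b i j : Fin 3) :
    AnalyticOnNhd ℝ (fun x => hessianTensor g a b x i j) V :=
  (G.analyticOnNhd_symProd a b i j).sub ((G.analytic a b).mul (G.analytic i j))

theorem sum_minv_mul_symProd (G : AnalyticMetricOn V g) (hx : x ∈ V) (a b k i : Fin 3) :
    ∑ l, minv (g x) k l * symProd g a b x l i
      = (if k = a then g x i b else 0) + if k = b then g x i a else 0 := by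
  simp only [symProd, mul_add, ← mul_assoc, sum_add_distrib, ← sum_mul, G.sum_minv_mul hx,
    ite_mul, one_mul, zero_mul]

theorem trT_symProd (G : AnalyticMetricOn V g) (hx : x ∈ V) (a b : Fin 3) :
    trT g (symProd g a b) x = 2 * g x a b := by
  have hrow : ∀ k, ∑ l, minv (g x) k l * symProd g a b x k l
      = (if k = a then g x k b else 0) + if k = b then g x k a else 0 := fun k => by
    simpa only [symProd_symm a b k] using G.sum_minv_mul_symProd hx a b k k
  simp only [trT, hrow, sum_add_distrib, sum_ite_eq', mem_univ, if_true, G.symm x b a]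
  ring

theorem trT_self (G : AnalyticMetricOn V g) (hx : x ∈ V) : trT g g x = 3 := by
  have hrow : ∀ k, ∑ l, minv (g x) k l * g x k l = 1 := fun k => by
    simpa only [G.symm x k, if_true] using G.sum_minv_mul hx k k
  simp [trT, hrow]

theorem raise2_symProd (G : AnalyticMetricOn V g) (hx : x ∈ V) (a b c d : Fin 3) :
    raise2 g (symProd g a b) x c d
      = (if c = a then if d = b then 1 else 0 else 0)
        + if c = b then if d = a then 1 else 0 else 0 := by
  have hrow : ∀ j, ∑ i, minv (g x) c i * minv (g x) d j * symProd g a b x i j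
      = minv (g x) d j * ((if c = a then g x j b else 0) + if c = b then g x j a else 0) :=
    fun j => by
      rw [← G.sum_minv_mul_symProd hx a b c j, mul_sum]
      exact sum_congr rfl fun i _ => by ring
  rw [raise2, sum_comm]
  simp only [hrow, mul_add, mul_ite, mul_zero, sum_add_distrib, sum_ite_irrel, sum_const_zero,
    G.sum_minv_mul hx]

theorem raise2_self (G : AnalyticMetricOn V g) (hx : x ∈ V) (c d : Fin 3) :
    raise2 g g x c d = minv (g x) c d := by
  have hrow : ∀ j, ∑ i, minv (g x) c i * minv (g x) d j * g x i j
      = minv (g x) d j * if c = j then 1 else 0 := fun j => by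
    rw [← G.sum_minv_mul hx c j, mul_sum]
    exact sum_congr rfl fun i _ => by ring
  rw [raise2, sum_comm]
  simp [hrow, G.minv_symm d c]

theorem raise2_hessianTensor_sub (G : AnalyticMetricOn V g) (hx : x ∈ V) (a b c d : Fin 3) :
    raise2 g (hessianTensor g a b) x c d - minv (g x) c d * trT g (hessianTensor g a b) x
      = (if c = a then if d = b then 1 else 0 else 0)
        + if c = b then if d = a then 1 else 0 else 0 := by
  have hraise : raise2 g (hessianTensor g a b) x c d
      = raise2 g (symProd g a b) x c d - g x a b * raise2 g g x c d := by
    simp only [raise2, hessianTensor, mul_sub, sum_sub_distrib, mul_sum, mul_left_comm (g x a b)]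
  have htr : trT g (hessianTensor g a b) x
      = trT g (symProd g a b) x - g x a b * trT g g x := by
    simp only [trT, hessianTensor, mul_sub, sum_sub_distrib, mul_sum, mul_left_comm (g x a b)]
  rw [hraise, htr, G.raise2_symProd hx, G.raise2_self hx, G.trT_symProd hx, G.trT_self hx]
  ring

theorem sum_raise2_hessianTensor_sub_mul (G : AnalyticMetricOn V g) (hx : x ∈ V) (a b : Fin 3)
    (P : Fin 3 → Fin 3 → ℝ) :
    ∑ c, ∑ d, (raise2 g (hessianTensor g a b) x c d
      - minv (g x) c d * trT g (hessianTensor g a b) x) * P c d = P a b + P b a := by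
  simp only [G.raise2_hessianTensor_sub hx, add_mul, sum_add_distrib, ite_mul, one_mul, zero_mul]
  simp

end AnalyticMetricOn

end TestTensors

/-! ### The linearized constraints on multiples of a fixed tensor -/

section Scaling

variable {g p T E : Vec → Mtx} {φ : Vec → ℝ} {x : Vec}

theorem trT_smul : trT g (φ • E) x = φ x * trT g E x := by
  simp only [trT, Pi.smul_apply', Pi.smul_apply, smul_eq_mul, mul_sum, mul_left_comm (φ x)]

theorem raise2_smul (i j : Fin 3) : raise2 g (φ • E) x i j = φ x * raise2 g E x i j := by
  simp only [raise2, Pi.smul_apply', Pi.smul_apply, smul_eq_mul, mul_sum, mul_left_comm (φ x)]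

theorem covD_smul (hφ : DifferentiableAt ℝ φ x)
    (hE : ∀ i j, DifferentiableAt ℝ (fun y => E y i j) x) (k i j : Fin 3) :
    covD g (φ • E) k i j x = φ x * covD g E k i j x + E x i j * pd k φ x := by
  simp only [covD, Pi.smul_apply', Pi.smul_apply, smul_eq_mul, pd_mul hφ (hE i j), mul_sub, mul_sum,
    mul_add, mul_left_comm (φ x)]
  ring

theorem divT_smul (hφ : DifferentiableAt ℝ φ x)
    (hE : ∀ i j, DifferentiableAt ℝ (fun y => E y i j) x) (i : Fin 3) :
    divT g (φ • E) i x
      = φ x * divT g E i x + ∑ k, (∑ l, minv (g x) k l * E x l i) * pd k φ x := by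
  simp only [divT, covD_smul hφ hE, mul_add, sum_add_distrib, mul_sum, sum_mul,
    mul_left_comm (φ x), mul_assoc]

theorem covD_zero (k i j : Fin 3) : covD g 0 k i j = 0 := by
  ext x
  simp [covD, pd]

theorem DHlin_zero : DHlin g p 0 T x
    = trT g p x * trT g T x - 2 * ∑ i, ∑ j, raise2 g p x i j * T x i j := by
  have htr : trT g 0 = 0 := by
    ext y
    simp [trT]
  simp only [DHlin, lapl, covD2T, covD_zero, htr, raise2]
  simp [pd]

theorem DHlin_zero_smul : DHlin g p 0 (φ • E) x = φ x * DHlin g p 0 E x := by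
  simp only [DHlin_zero, trT_smul, Pi.smul_apply', Pi.smul_apply, smul_eq_mul, mul_sum, mul_sub,
    mul_left_comm (φ x)]

theorem AnalyticMetricOn.analyticOnNhd_DHlin_zero {V : Set Vec} (G : AnalyticMetricOn V g)
    (hp : ∀ i j, AnalyticOnNhd ℝ (fun x => p x i j) V)
    (hE : ∀ i j, AnalyticOnNhd ℝ (fun x => E x i j) V) :
    AnalyticOnNhd ℝ (fun x => DHlin g p 0 E x) V := by
  simp only [DHlin_zero]
  exact ((G.analyticOnNhd_trT hp).mul (G.analyticOnNhd_trT hE)).sub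
    (analyticOnNhd_const.mul (Finset.analyticOnNhd_fun_sum _ fun i _ =>
      Finset.analyticOnNhd_fun_sum _ fun j _ => (G.analyticOnNhd_raise2 hp i j).mul (hE i j)))

theorem DMlin_zero (i : Fin 3) : DMlin g p 0 T i x = divT g T i x := by
  simp [DMlin, covD_zero, raise2]

end Scaling

namespace AnalyticMetricOn

variable {V : Set Vec} {g p E : Vec → Mtx} {τ : Vec → ℝ}

theorem covD_smul_mem_firstOrder (G : AnalyticMetricOn V g)
    (hE : ∀ i j, AnalyticOnNhd ℝ (fun x => E x i j) V) (k i j : Fin 3) :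
    (fun s => covD g (s.1 • E) k i j s.2) ∈ firstOrder V := by
  refine mem_analyticSpan_congr (fun s hs => ?_)
    (add_mem (mul_self_mem_firstOrder (G.analyticOnNhd_covD hE k i j))
      (mul_pd_mem_firstOrder (hE i j) k))
  have hφ : ContDiff ℝ (⊤ : ℕ∞) s.1 := hs.1
  exact covD_smul (hφ.differentiable (by simp)).differentiableAt
    (fun i j => (hE i j s.2 hs.2).differentiableAt) k i j

theorem covD2T_smul_sub_mem_firstOrder (G : AnalyticMetricOn V g)
    (hE : ∀ i j, AnalyticOnNhd ℝ (fun x => E x i j) V) (a b i j : Fin 3) :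
    (fun s => covD2T g (s.1 • E) a b i j s.2 - E s.2 i j * pd a (pd b s.1) s.2)
      ∈ firstOrder V := by
  have hΓ := G.analyticOnNhd_Gam
  have hcov := G.covD_smul_mem_firstOrder hE
  have hτ : AnalyticOnNhd ℝ
      (fun y => -∑ l, (Gam g l b i y * E y l j + Gam g l b j y * E y i l)) V :=
    (Finset.analyticOnNhd_fun_sum _ fun l _ =>
      ((hΓ l b i).mul (hE l j)).add ((hΓ l b j).mul (hE i l))).neg
  refine mem_analyticSpan_congr (fun s hs => ?_) (sub_mem
    (add_mem (pd_pd_mul_sub_mem_firstOrder G.isOpen (hE i j) a b) (pd_mul_mem_firstOrder hτ a))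
    (fun_sum_mem_analyticSpan (t := univ) fun c _ => add_mem (add_mem
      (mul_mem_analyticSpan (hΓ c a b) (hcov c i j))
      (mul_mem_analyticSpan (hΓ c a i) (hcov b c j)))
      (mul_mem_analyticSpan (hΓ c a j) (hcov b i c))))
  have hφ : ContDiff ℝ (⊤ : ℕ∞) s.1 := hs.1
  have hsplit : covD g (s.1 • E) b i j = fun y => pd b (fun z => s.1 z * E z i j) y
      + s.1 y * -∑ l, (Gam g l b i y * E y l j + Gam g l b j y * E y i l) := by
    ext y
    simp only [covD, Pi.smul_apply', Pi.smul_apply, smul_eq_mul, mul_neg, mul_sum, mul_add,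
      mul_left_comm (s.1 y), sub_eq_add_neg]
  have hpd := contDiffOn_pd G.isOpen
    (hφ.contDiffOn.mul (hE i j).contDiffOn_of_completeSpace) b
  have hsτ := hφ.contDiffOn.mul hτ.contDiffOn_of_completeSpace
  simp only [covD2T, hsplit, Pi.add_apply, Pi.sub_apply]
  rw [pd_add (differentiableAt_of_contDiffOn G.isOpen hpd hs.2)
    (differentiableAt_of_contDiffOn G.isOpen hsτ hs.2)]
  ring

theorem lapl_mul_sub_mem_firstOrder (G : AnalyticMetricOn V g) (hτ : AnalyticOnNhd ℝ τ V) :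
    (fun s => lapl g (fun y => s.1 y * τ y) s.2
      - ∑ i, ∑ j, minv (g s.2) i j * τ s.2 * pd i (pd j s.1) s.2) ∈ firstOrder V := by
  refine mem_analyticSpan_congr (fun s _ => ?_)
    (fun_sum_mem_analyticSpan (t := univ) fun i _ => fun_sum_mem_analyticSpan (t := univ) fun j _ =>
      mul_mem_analyticSpan (G.analyticOnNhd_minv i j) (sub_mem
        (pd_pd_mul_sub_mem_firstOrder G.isOpen hτ i j)
        (fun_sum_mem_analyticSpan (t := univ) fun k _ =>
          mul_mem_analyticSpan (G.analyticOnNhd_Gam k i j) (pd_mul_mem_firstOrder hτ k))))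
  simp only [lapl, ← sum_sub_distrib, Pi.sub_apply]
  exact sum_congr rfl fun i _ => sum_congr rfl fun j _ => by ring

theorem sum_minv_mul_minv_mul (G : AnalyticMetricOn V g) (x : Vec) (P : Fin 3 → Fin 3 → ℝ) :
    ∑ i, ∑ j, ∑ a, ∑ b, minv (g x) i a * minv (g x) j b * (E x i j * P a b)
      = ∑ a, ∑ b, raise2 g E x a b * P a b := by
  rw [sum_comm_cycle]
  refine sum_congr rfl fun a _ => ?_
  rw [sum_comm_cycle]
  refine sum_congr rfl fun b _ => ?_
  simp only [raise2, sum_mul, G.minv_symm a, G.minv_symm b, mul_assoc]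

theorem DHlin_smul_zero_sub_mem_firstOrder (G : AnalyticMetricOn V g)
    (hp : ∀ i j, AnalyticOnNhd ℝ (fun x => p x i j) V)
    (hE : ∀ i j, AnalyticOnNhd ℝ (fun x => E x i j) V) :
    (fun s => DHlin g p (s.1 • E) 0 s.2
      - ∑ c, ∑ d, (raise2 g E s.2 c d - minv (g s.2) c d * trT g E s.2) * pd c (pd d s.1) s.2)
      ∈ firstOrder V := by
  have hinv := G.analyticOnNhd_minv
  have hraiseE := G.analyticOnNhd_raise2 hE
  have hzero : AnalyticOnNhd ℝ (fun x => -(∑ i, ∑ j, raise2 g E x i j * RicT g i j x)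
      - trT g p x * (∑ i, ∑ j, raise2 g p x i j * E x i j)
      + 2 * ∑ i, ∑ j, raise2 g E x i j * ∑ k, ∑ l, minv (g x) k l * p x i k * p x j l) V := by
    refine ((Finset.analyticOnNhd_fun_sum _ fun i _ => Finset.analyticOnNhd_fun_sum _ fun j _ =>
      (hraiseE i j).mul (G.analyticOnNhd_RicT i j)).neg.sub ((G.analyticOnNhd_trT hp).mul
        (Finset.analyticOnNhd_fun_sum _ fun i _ => Finset.analyticOnNhd_fun_sum _ fun j _ =>
          (G.analyticOnNhd_raise2 hp i j).mul (hE i j)))).add (analyticOnNhd_const.mul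
        (Finset.analyticOnNhd_fun_sum _ fun i _ => Finset.analyticOnNhd_fun_sum _ fun j _ =>
          (hraiseE i j).mul (Finset.analyticOnNhd_fun_sum _ fun k _ =>
            Finset.analyticOnNhd_fun_sum _ fun l _ => ((hinv k l).mul (hp i k)).mul (hp j l))))
  refine mem_analyticSpan_congr (fun s _ => ?_) (add_mem (sub_mem
    (fun_sum_mem_analyticSpan (t := univ) fun i _ => fun_sum_mem_analyticSpan (t := univ) fun j _ =>
      fun_sum_mem_analyticSpan (t := univ) fun a _ =>
        fun_sum_mem_analyticSpan (t := univ) fun b _ =>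
          mul_mem_analyticSpan ((hinv i a).mul (hinv j b))
            (G.covD2T_smul_sub_mem_firstOrder hE a b i j))
    (G.lapl_mul_sub_mem_firstOrder (G.analyticOnNhd_trT hE))) (mul_self_mem_firstOrder hzero))
  have hlapl : (fun y => trT g (s.1 • E) y) = fun y => s.1 y * trT g E y :=
    funext fun _ => trT_smul
  have htr0 : trT g 0 s.2 = 0 := by simp [trT]
  simp only [DHlin, hlapl, htr0, Pi.add_apply, Pi.sub_apply, raise2_smul, mul_sub, sub_mul,
    sum_sub_distrib, G.sum_minv_mul_minv_mul]
  simp only [Pi.smul_apply', Pi.smul_apply, smul_eq_mul, Pi.zero_apply, mul_zero, sum_const_zero,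
    mul_assoc, mul_left_comm _ (s.1 s.2), ← mul_sum]
  ring

theorem DMlin_smul_zero_mem_firstOrder (G : AnalyticMetricOn V g)
    (hp : ∀ i j, AnalyticOnNhd ℝ (fun x => p x i j) V)
    (hE : ∀ i j, AnalyticOnNhd ℝ (fun x => E x i j) V) (i : Fin 3) :
    (fun s => DMlin g p (s.1 • E) 0 i s.2) ∈ firstOrder V := by
  have hinv := G.analyticOnNhd_minv
  have hcov := G.covD_smul_mem_firstOrder hE
  have hzero : AnalyticOnNhd ℝ (fun x => ∑ k, ∑ l, raise2 g E x k l * covD g p k l i x) V :=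
    Finset.analyticOnNhd_fun_sum _ fun k _ => Finset.analyticOnNhd_fun_sum _ fun l _ =>
      (G.analyticOnNhd_raise2 hE k l).mul (G.analyticOnNhd_covD hp k l i)
  have hmixed : ∀ j, AnalyticOnNhd ℝ (fun x => ∑ a, minv (g x) j a * p x i a) V := fun j =>
    Finset.analyticOnNhd_fun_sum _ fun a _ => (hinv j a).mul (hp i a)
  have hgrad : ∀ j, (fun s : (Vec → ℝ) × Vec => ∑ k, ∑ l, minv (g s.2) k l *
      (covD g (s.1 • E) k l j s.2 - (1 / 2) * covD g (s.1 • E) j k l s.2)) ∈ firstOrder V :=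
    fun j => fun_sum_mem_analyticSpan fun k _ => fun_sum_mem_analyticSpan fun l _ =>
      mul_mem_analyticSpan (hinv k l) (sub_mem (hcov k l j)
        (mul_mem_analyticSpan analyticOnNhd_const (hcov j k l)))
  refine mem_analyticSpan_congr (fun s _ => ?_) (neg_mem (add_mem (add_mem
    (mul_self_mem_firstOrder hzero)
    (fun_sum_mem_analyticSpan (t := univ) fun j _ => mul_mem_analyticSpan (hmixed j) (hgrad j)))
    (mul_mem_analyticSpan (analyticOnNhd_const (v := 1 / 2))
      (fun_sum_mem_analyticSpan (t := univ) fun k _ => fun_sum_mem_analyticSpan (t := univ)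
        fun l _ => mul_mem_analyticSpan (G.analyticOnNhd_raise2 hp k l) (hcov i k l)))))
  have hdiv0 : divT g 0 i s.2 = 0 := by simp [divT, covD_zero]
  simp only [DMlin, hdiv0, raise2_smul, mul_assoc, ← mul_sum, Pi.neg_apply, Pi.add_apply]
  ring

end AnalyticMetricOn

/-! ### The closed linear system satisfied by a KID -/

theorem continuous_rad : Continuous rad := by
  unfold rad
  fun_prop

section Locality

variable {g p T h ϖ E : Vec → Mtx} {x : Vec} {φ : Vec → ℝ} {Ω : Set Vec}

theorem covD_eventuallyEq_zero (hT : T =ᶠ[𝓝 x] 0) (k i j : Fin 3) :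
    covD g T k i j =ᶠ[𝓝 x] 0 := by
  filter_upwards [hT.eventuallyEq_nhds] with y hy
  have hpd : pd k (fun z => T z i j) y = pd k 0 y :=
    pd_eq_of_eventuallyEq (hy.fun_comp fun t => t i j) k
  rw [covD, hpd]
  simp [hy.eq_of_nhds, pd]

theorem DPhi_eq_zero_of_eventuallyEq_zero (hh : h =ᶠ[𝓝 x] 0) (hϖ : ϖ =ᶠ[𝓝 x] 0) :
    (DPhi g p h ϖ).1 x = 0 ∧ (DPhi g p h ϖ).2 x = 0 := by
  have hcovh := covD_eventuallyEq_zero (g := g) hh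
  have hcovϖ := covD_eventuallyEq_zero (g := g) hϖ
  have htr : trT g h =ᶠ[𝓝 x] 0 := hh.mono fun y hy => by simp [trT, hy]
  have hpd0 : ∀ k, pd k (0 : Vec → ℝ) = 0 := fun k => by ext; simp [pd]
  have hpdtr : ∀ k, pd k (trT g h) =ᶠ[𝓝 x] 0 := fun k =>
    htr.eventuallyEq_nhds.mono fun y hy => by rw [pd_eq_of_eventuallyEq hy, hpd0]
  have hlapl : lapl g (fun y => trT g h y) x = 0 := by
    simp [lapl, (hpdtr _).eq_of_nhds, pd_eq_of_eventuallyEq (hpdtr _), hpd0]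
  have hcov2 : ∀ a b i j, covD2T g h a b i j x = 0 := fun a b i j => by
    simp [covD2T, (hcovh _ _ _).eq_of_nhds, pd_eq_of_eventuallyEq (hcovh _ _ _), hpd0]
  have htrϖ : trT g ϖ x = 0 := by simp [trT, hϖ.eq_of_nhds]
  have hDH : DHlin g p h ϖ x = 0 := by
    simp [DHlin, hlapl, hcov2, htrϖ, raise2, hh.eq_of_nhds, hϖ.eq_of_nhds]
  have hDM : ∀ i, DMlin g p h ϖ i x = 0 := fun i => by
    simp [DMlin, divT, (hcovh _ _ _).eq_of_nhds, (hcovϖ _ _ _).eq_of_nhds, raise2, hh.eq_of_nhds]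
  exact ⟨by simp [DPhi, hDH], by ext i; simp [DPhi, hDM]⟩

theorem IsTestFunction.smul_tensor (hφ : IsTestFunction Ω φ) (hE : ContDiff ℝ (⊤ : ℕ∞) E) :
    ContDiff ℝ (⊤ : ℕ∞) (φ • E) ∧ IsCompact (tsupport (φ • E)) ∧ tsupport (φ • E) ⊆ Ω :=
  have hsub : tsupport (φ • E) ⊆ tsupport φ := tsupport_smul_subset_left φ E
  ⟨hφ.contDiff.smul hE, hφ.hasCompactSupport.of_isClosed_subset (isClosed_tsupport _) hsub,
    hsub.trans hφ.tsupport_subset⟩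

end Locality

/-- The pair `(f, X)` is a distributional KID on the open set `Ω ⊆ V`, where the data `(g, p)` are
analytic on `V`; this is what `KIDon` says in the interior of `Σ`. -/
structure IsWeakKID (V Ω : Set Vec) (g p : Vec → Mtx) (f : Vec → ℝ) (X : Vec → Vec) : Prop where
  metric : AnalyticMetricOn V g
  analytic_p : ∀ i j, AnalyticOnNhd ℝ (fun x => p x i j) V
  isOpen : IsOpen Ω
  subset : Ω ⊆ V
  contDiff_g : ContDiff ℝ (⊤ : ℕ∞) g
  contDiff_f : ContDiff ℝ (⊤ : ℕ∞) f
  contDiff_X : ContDiff ℝ (⊤ : ℕ∞) X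
  setIntegral_eq_zero : ∀ h ϖ : Vec → Mtx,
    ContDiff ℝ (⊤ : ℕ∞) h → ContDiff ℝ (⊤ : ℕ∞) ϖ →
    (∀ x i j, h x i j = h x j i) → (∀ x i j, ϖ x i j = ϖ x j i) →
    IsCompact (tsupport h) → IsCompact (tsupport ϖ) → tsupport h ⊆ Ω → tsupport ϖ ⊆ Ω →
    ∫ x in Ω, ((DPhi g p h ϖ).1 x * f x + ∑ i, (DPhi g p h ϖ).2 x i * X x i) * dens g x = 0

theorem KIDon.setIntegral_eq_zero {O Ω : Set Vec} {g p h ϖ : Vec → Mtx} {r₀ : ℝ} {f : Vec → ℝ}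
    {X : Vec → Vec} (hkid : KIDon g p r₀ (f, X) O) (hΩO : Ω ⊆ O ∩ {x | r₀ < rad x})
    (hh : ContDiff ℝ (⊤ : ℕ∞) h) (hϖ : ContDiff ℝ (⊤ : ℕ∞) ϖ)
    (hhs : ∀ x i j, h x i j = h x j i) (hϖs : ∀ x i j, ϖ x i j = ϖ x j i)
    (hhc : IsCompact (tsupport h)) (hϖc : IsCompact (tsupport ϖ))
    (hhΩ : tsupport h ⊆ Ω) (hϖΩ : tsupport ϖ ⊆ Ω) :
    ∫ x in Ω, ((DPhi g p h ϖ).1 x * f x + ∑ i, (DPhi g p h ϖ).2 x i * X x i) * dens g x = 0 := by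
  rw [← hkid h ϖ hh hϖ hhs hϖs hhc hϖc (hhΩ.trans hΩO) (hϖΩ.trans hΩO)]
  refine (setIntegral_eq_of_subset_of_forall_sdiff_eq_zero ?_
    (fun x hx => le_of_lt (b := rad x) (hΩO hx).2) fun x hx => ?_).symm
  · exact measurableSet_le measurable_const continuous_rad.measurable
  · obtain ⟨hH, hM⟩ := DPhi_eq_zero_of_eventuallyEq_zero (g := g) (p := p)
      (notMem_tsupport_iff_eventuallyEq.1 fun hc => hx.2 (hhΩ hc))
      (notMem_tsupport_iff_eventuallyEq.1 fun hc => hx.2 (hϖΩ hc))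
    simp [hH, hM]

/-- The covector components `X_b = g_{ib} Xⁱ`. -/
def lowerX (g : Vec → Mtx) (X : Vec → Vec) (b : Fin 3) (x : Vec) : ℝ := ∑ i, g x i b * X x i

/-- The unknowns of the system: `none` is `f` and `some b` is `X_b`. -/
def kidUnknowns (g : Vec → Mtx) (f : Vec → ℝ) (X : Vec → Vec) (o : Option (Fin 3)) : Vec → ℝ :=
  o.elim f (lowerX g X)

theorem contDiff_kidUnknowns {g : Vec → Mtx} {f : Vec → ℝ} {X : Vec → Vec}
    (hg : ContDiff ℝ (⊤ : ℕ∞) g) (hf : ContDiff ℝ (⊤ : ℕ∞) f) (hX : ContDiff ℝ (⊤ : ℕ∞) X) :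
    ∀ o, ContDiff ℝ (⊤ : ℕ∞) (kidUnknowns g f X o)
  | none => hf
  | some b => by
    change ContDiff ℝ (⊤ : ℕ∞) fun x => ∑ i, g x i b * X x i
    fun_prop

theorem AnalyticMetricOn.sum_minv_mul_lowerX {V : Set Vec} {g : Vec → Mtx} {X : Vec → Vec} {x : Vec}
    (G : AnalyticMetricOn V g) (hx : x ∈ V) (i : Fin 3) :
    ∑ m, minv (g x) i m * lowerX g X m x = X x i := by
  have hcol : ∀ j, ∑ m, minv (g x) i m * (g x j m * X x j) = if i = j then X x j else 0 :=
    fun j => by simp only [G.symm x j, ← mul_assoc, ← sum_mul, G.sum_minv_mul hx, ite_mul, one_mul,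
      zero_mul]
  simp only [lowerX, mul_sum]
  rw [sum_comm]
  simp only [hcol, sum_ite_eq, mem_univ, if_true]

theorem AnalyticMetricOn.mem_analyticSpan_kidUnknowns {V Z : Set Vec} {g : Vec → Mtx} {f : Vec → ℝ}
    {X : Vec → Vec} (G : AnalyticMetricOn V g) (hZV : Z ⊆ V) (i : Fin 3) :
    (fun x => X x i) ∈ analyticSpan V id Z (kidUnknowns g f X) :=
  mem_analyticSpan_congr (fun _ hx => (G.sum_minv_mul_lowerX (hZV hx) i).symm)
    (fun_sum_mem_analyticSpan fun m _ => mul_mem_analyticSpan (G.analyticOnNhd_minv i m)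
      (generator_mem_analyticSpan (w := kidUnknowns g f X) (some m)))

/-- As for Christoffel symbols, the derivatives of `∂ₐu_b` are combinations of those of the
symmetrization `∂ₐu_b + ∂_buₐ`. -/
theorem pd_pd_mem_of_pd_add_pd_mem {ι : Type*} [Fintype ι] {V Ω : Set Vec} {w : ι → Vec → ℝ}
    {u : Fin 3 → Vec → ℝ} (hΩ : IsOpen Ω) (hΩV : Ω ⊆ V)
    (hw : ∀ i, ContDiffOn ℝ (⊤ : ℕ∞) (w i) Ω) (hu : ∀ b, ContDiffOn ℝ (⊤ : ℕ∞) (u b) Ω)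
    (hsymm : ∀ a b, (fun x => pd a (u b) x + pd b (u a) x) ∈ analyticSpan V id Ω w)
    (m a b : Fin 3) : pd m (pd a (u b)) ∈ analyticSpan V id Ω (prolong w) := by
  have hpd : ∀ m a b, pd m (fun x => pd a (u b) x + pd b (u a) x)
      ∈ analyticSpan V id Ω (prolong w) :=
    fun m a b => pd_mem_analyticSpan_prolong hΩ hΩV hw (hsymm a b) m
  refine mem_analyticSpan_congr (fun x hx => ?_)
    (Submodule.smul_mem _ (1 / 2 : ℝ) (sub_mem (add_mem (hpd m a b) (hpd a b m)) (hpd b m a)))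
  have hd : ∀ a b, DifferentiableAt ℝ (pd a (u b)) x := fun a b =>
    differentiableAt_of_contDiffOn hΩ (contDiffOn_pd hΩ (hu b) a) hx
  have hcomm : ∀ c a b, pd a (pd b (u c)) x = pd b (pd a (u c)) x := fun c =>
    pd_comm ((hu c).contDiffAt (hΩ.mem_nhds hx))
  simp only [Pi.smul_apply, Pi.sub_apply, Pi.add_apply, smul_eq_mul, pd_add (hd _ _) (hd _ _)]
  rw [hcomm b a m, hcomm a b m, hcomm m a b]
  ring

theorem AnalyticMetricOn.sum_divT_smul_symProd_mul {V : Set Vec} {g : Vec → Mtx} {φ : Vec → ℝ}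
    {X : Vec → Vec} {x : Vec} (G : AnalyticMetricOn V g) (hx : x ∈ V) (hφ : DifferentiableAt ℝ φ x)
    (a b : Fin 3) (c : ℝ) :
    ∑ i, divT g (φ • symProd g a b) i x * (c * X x i)
      = φ x * ∑ i, divT g (symProd g a b) i x * (c * X x i)
        + (pd a φ x * (c * lowerX g X b x) + pd b φ x * (c * lowerX g X a x)) := by
  have hterm : ∀ i, divT g (φ • symProd g a b) i x
      = φ x * divT g (symProd g a b) i x + (g x i b * pd a φ x + g x i a * pd b φ x) := fun i => by
    rw [divT_smul hφ fun i j => (G.analyticOnNhd_symProd a b i j x hx).differentiableAt]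
    simp only [G.sum_minv_mul_symProd hx, add_mul, ite_mul, zero_mul, sum_add_distrib, sum_ite_eq',
      mem_univ, if_true]
  simp only [hterm, lowerX, Fin.sum_univ_three]
  ring

namespace IsWeakKID

variable {V Ω : Set Vec} {g p E : Vec → Mtx} {f φ : Vec → ℝ} {X : Vec → Vec}

theorem contDiffOn_kidUnknowns (K : IsWeakKID V Ω g p f X) (o : Option (Fin 3)) :
    ContDiffOn ℝ (⊤ : ℕ∞) (kidUnknowns g f X o) Ω :=
  (contDiff_kidUnknowns K.contDiff_g K.contDiff_f K.contDiff_X o).contDiffOn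

theorem dens_mul_fst_mem (K : IsWeakKID V Ω g p f X) :
    (fun x => dens g x * f x) ∈ analyticSpan V id Ω (kidUnknowns g f X) :=
  mul_mem_analyticSpan K.metric.analyticOnNhd_dens
    (generator_mem_analyticSpan (w := kidUnknowns g f X) none)

theorem dens_mul_snd_mem (K : IsWeakKID V Ω g p f X) (i : Fin 3) :
    (fun x => dens g x * X x i) ∈ analyticSpan V id Ω (kidUnknowns g f X) :=
  mul_mem_analyticSpan K.metric.analyticOnNhd_dens
    (K.metric.mem_analyticSpan_kidUnknowns K.subset i)

theorem integral_smul_zero (K : IsWeakKID V Ω g p f X) (hE : ContDiff ℝ (⊤ : ℕ∞) E)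
    (hEs : ∀ x i j, E x i j = E x j i) (hφ : IsTestFunction Ω φ) :
    ∫ x in Ω, ((1 / 2 : ℝ) * (DHlin g p (φ • E) 0 x * (dens g x * f x))
      - ∑ i, DMlin g p (φ • E) 0 i x * (dens g x * X x i)) = 0 := by
  obtain ⟨hh, hhc, hhΩ⟩ := hφ.smul_tensor hE
  have hint := K.setIntegral_eq_zero (φ • E) 0 hh contDiff_const
    (fun x i j => by simp only [Pi.smul_apply', Pi.smul_apply, hEs x i j]) (fun _ _ _ => rfl) hhc
    (by simp [tsupport_zero]) hhΩ (by simp)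
  rw [← mul_zero (-1 / 2 : ℝ), ← hint, ← integral_const_mul]
  congr 1 with x
  simp only [DPhi, Fin.sum_univ_three]
  ring

theorem integral_zero_smul (K : IsWeakKID V Ω g p f X) (hE : ContDiff ℝ (⊤ : ℕ∞) E)
    (hEs : ∀ x i j, E x i j = E x j i) (hφ : IsTestFunction Ω φ) :
    ∫ x in Ω, (∑ i, divT g (φ • E) i x * (dens g x * X x i)
      - (1 / 2 : ℝ) * (φ x * DHlin g p 0 E x * (dens g x * f x))) = 0 := by
  obtain ⟨hϖ, hϖc, hϖΩ⟩ := hφ.smul_tensor hE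
  have hint := K.setIntegral_eq_zero 0 (φ • E) contDiff_const hϖ (fun _ _ _ => rfl)
    (fun x i j => by simp only [Pi.smul_apply', Pi.smul_apply, hEs x i j])
    (by simp [tsupport_zero]) hϖc (by simp) hϖΩ
  rw [← mul_zero (1 / 2 : ℝ), ← hint, ← integral_const_mul]
  congr 1 with x
  simp only [DPhi, DMlin_zero, DHlin_zero_smul, Fin.sum_univ_three]
  ring

theorem pd_pd_fst_mem (K : IsWeakKID V Ω g p f X) (a b : Fin 3) :
    pd a (pd b f) ∈ analyticSpan V id Ω (prolong (kidUnknowns g f X)) := by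
  have hE := K.metric.analyticOnNhd_hessianTensor a b
  have hRH := firstOrder_mul_mem_transposableInto K.isOpen K.subset K.contDiffOn_kidUnknowns
    (K.metric.DHlin_smul_zero_sub_mem_firstOrder K.analytic_p hE) K.dens_mul_fst_mem
  have hRM := fun i => firstOrder_mul_mem_transposableInto K.isOpen K.subset
    K.contDiffOn_kidUnknowns (K.metric.DMlin_smul_zero_mem_firstOrder K.analytic_p hE i)
    (K.dens_mul_snd_mem i)
  have hR := sub_mem (Submodule.smul_mem _ (1 / 2 : ℝ) hRH) (sum_mem fun i (_ : i ∈ univ) => hRM i)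
  have hv := contDiffOn_of_mem_analyticSpan K.subset K.contDiffOn_kidUnknowns K.dens_mul_fst_mem
  have hL := ((HasTranspose.of_mul K.isOpen hv).comp_pd K.isOpen b).comp_pd K.isOpen a
  have hmem := hL.mem_analyticSpan_of_integral_eq_zero K.isOpen hR fun φ hφ => by
    rw [← K.integral_smul_zero (contDiff_hessianTensor K.contDiff_g a b)
      (fun _ => K.metric.hessianTensor_symm a b) hφ]
    refine setIntegral_congr_fun K.isOpen.measurableSet fun x hx => ?_
    simp only [Pi.sub_apply, Pi.smul_apply, smul_eq_mul, Finset.sum_apply,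
      K.metric.sum_raise2_hessianTensor_sub_mul (K.subset hx),
      pd_comm hφ.contDiff.contDiffAt b a]
    ring
  rw [pd_neg, neg_neg] at hmem
  refine mem_analyticSpan_of_mul_mem K.metric.analyticOnNhd_dens
    (fun x hx => (K.metric.dens_pos hx).ne') K.subset ?_
  refine mem_analyticSpan_congr (fun x _ => ?_) (sub_mem hmem
    (pd_pd_mul_sub_mem_analyticSpan K.isOpen K.subset K.contDiffOn_kidUnknowns
      K.metric.analyticOnNhd_dens (generator_mem_analyticSpan (w := kidUnknowns g f X) none) a b))
  exact (sub_sub_cancel _ _).symm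

theorem pd_lowerX_add_mem (K : IsWeakKID V Ω g p f X) (a b : Fin 3) :
    (fun x => pd a (lowerX g X b) x + pd b (lowerX g X a) x)
      ∈ analyticSpan V id Ω (kidUnknowns g f X) := by
  have hE := K.metric.analyticOnNhd_symProd a b
  have hR := sub_mem
    (fun_sum_mem_analyticSpan (t := univ) fun i _ =>
      mul_mem_analyticSpan (K.metric.analyticOnNhd_divT hE i) (K.dens_mul_snd_mem i))
    (Submodule.smul_mem _ (1 / 2 : ℝ) (mul_mem_analyticSpan
      (K.metric.analyticOnNhd_DHlin_zero K.analytic_p hE) K.dens_mul_fst_mem))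
  have hlower : ∀ c, lowerX g X c ∈ analyticSpan V id Ω (kidUnknowns g f X) := fun c =>
    generator_mem_analyticSpan (w := kidUnknowns g f X) (some c)
  have hL : ∀ c d, HasTranspose Ω (fun s => pd c s.1 s.2 * (dens g s.2 * lowerX g X d s.2))
      (-pd c fun x => dens g x * lowerX g X d x) := fun c d =>
    (HasTranspose.of_mul K.isOpen (contDiffOn_of_mem_analyticSpan K.subset K.contDiffOn_kidUnknowns
      (mul_mem_analyticSpan K.metric.analyticOnNhd_dens (hlower d)))).comp_pd K.isOpen c
  have hmem := ((hL a b).add K.isOpen (hL b a)).mem_analyticSpan_of_integral_eq_zero K.isOpen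
    (mul_mem_transposableInto K.isOpen K.subset K.contDiffOn_kidUnknowns hR) fun φ hφ => by
      rw [← K.integral_zero_smul (contDiff_symProd K.contDiff_g a b)
        (fun _ => symProd_symm a b) hφ]
      refine setIntegral_congr_fun K.isOpen.measurableSet fun x hx => ?_
      simp only [K.metric.sum_divT_smul_symProd_mul (K.subset hx)
        (hφ.contDiff.differentiable (by simp)).differentiableAt, Pi.add_apply, Pi.sub_apply,
        Pi.smul_apply, smul_eq_mul, id_eq]
      ring
  have hprod := fun c d => pd_mul_sub_mem_analyticSpan K.isOpen K.subset K.contDiffOn_kidUnknowns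
    K.metric.analyticOnNhd_dens (hlower d) c
  refine mem_analyticSpan_of_mul_mem K.metric.analyticOnNhd_dens
    (fun x hx => (K.metric.dens_pos hx).ne') K.subset ?_
  refine mem_analyticSpan_congr (fun x _ => ?_)
    (neg_mem (add_mem hmem (add_mem (hprod a b) (hprod b a))))
  simp only [Pi.add_apply, Pi.neg_apply, id_eq]
  ring

theorem pd_prolong_kidUnknowns_mem (K : IsWeakKID V Ω g p f X) (k : Fin 3) :
    ∀ q, pd k (prolong (kidUnknowns g f X) q)
      ∈ analyticSpan V id Ω (prolong (kidUnknowns g f X))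
  | (none, i) => generator_mem_analyticSpan (w := prolong (kidUnknowns g f X)) (some k, i)
  | (some j, none) => K.pd_pd_fst_mem k j
  | (some j, some b) => pd_pd_mem_of_pd_add_pd_mem K.isOpen K.subset K.contDiffOn_kidUnknowns
      (fun b => K.contDiffOn_kidUnknowns (some b)) K.pd_lowerX_add_mem k j b

end IsWeakKID

/-! ### Analyticity on the sphere -/

section Sphere

variable {r₀ : ℝ} {x x₀ y : Vec} {E : Type} [NormedAddCommGroup E] [NormedSpace ℝ E]

theorem rad_eq_norm (x : Vec) : rad x = ‖WithLp.toLp 2 x‖ := by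
  simp [rad, EuclideanSpace.norm_eq, Fin.sum_univ_three]

theorem rad_smul {c : ℝ} (hc : 0 ≤ c) (x : Vec) : rad (c • x) = c * rad x := by
  rw [rad_eq_norm, WithLp.toLp_smul, norm_smul, Real.norm_of_nonneg hc, rad_eq_norm]

theorem dotProduct_self_eq_rad_sq (x : Vec) : x ⬝ᵥ x = rad x ^ 2 := by
  rw [rad_eq_norm, ← real_inner_self_eq_norm_sq, EuclideanSpace.inner_toLp_toLp, star_trivial]

theorem dotProduct_le_rad_mul_rad (x y : Vec) : x ⬝ᵥ y ≤ rad x * rad y := by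
  have h := real_inner_le_norm (WithLp.toLp 2 y) (WithLp.toLp 2 x)
  rwa [EuclideanSpace.inner_toLp_toLp, star_trivial, ← rad_eq_norm, ← rad_eq_norm, mul_comm] at h

theorem analyticAt_coord (i : Fin 3) (x : Vec) : AnalyticAt ℝ (fun y : Vec => y i) x :=
  (ContinuousLinearMap.proj (R := ℝ) (φ := fun _ : Fin 3 => ℝ) i).analyticAt x

theorem analyticAt_rad (hx : 0 < rad x) : AnalyticAt ℝ rad x := by
  have hsq : AnalyticAt ℝ (fun y : Vec => y 0 ^ 2 + y 1 ^ 2 + y 2 ^ 2) x :=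
    (((analyticAt_coord 0 x).fun_pow 2).fun_add ((analyticAt_coord 1 x).fun_pow 2)).fun_add
      ((analyticAt_coord 2 x).fun_pow 2)
  exact AnalyticAt.comp (f := fun y : Vec => y 0 ^ 2 + y 1 ^ 2 + y 2 ^ 2)
    (Real.contDiffAt_sqrt (Real.sqrt_pos.1 hx).ne').analyticAt hsq

theorem openSegment_subset_lt_rad (hr₀ : 0 < r₀) (hx : x ∈ bdry r₀) (hyx : r₀ ^ 2 < y ⬝ᵥ x) :
    openSegment ℝ y x ⊆ {z | r₀ < rad z} := by
  rintro _ ⟨a, b, ha, _, hab, rfl⟩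
  have hx' : rad x = r₀ := hx
  have hdot : r₀ * r₀ < (a • y + b • x) ⬝ᵥ x := by
    rw [add_dotProduct, smul_dotProduct, smul_dotProduct, dotProduct_self_eq_rad_sq, hx']
    simp only [smul_eq_mul]
    nlinarith
  exact lt_of_mul_lt_mul_right (hdot.trans_le ((dotProduct_le_rad_mul_rad _ x).trans_eq
    (by rw [hx']))) hr₀.le

theorem exists_eventually_openSegment_subset_lt_rad (hr₀ : 0 < r₀) (hx₀ : x₀ ∈ bdry r₀)
    {U : Set Vec} (hU : U ∈ 𝓝 x₀) :
    ∃ y ∈ U, r₀ < rad y ∧ ∀ᶠ x in 𝓝[bdry r₀] x₀, openSegment ℝ y x ⊆ {z | r₀ < rad z} := by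
  have hx₀' : rad x₀ = r₀ := hx₀
  have hlim : Tendsto (fun c : ℝ => c • x₀) (𝓝[>] 1) (𝓝 x₀) := by
    have hcont : Continuous fun c : ℝ => c • x₀ := by fun_prop
    simpa only [one_smul] using (hcont.tendsto 1).mono_left nhdsWithin_le_nhds
  obtain ⟨c, hcU, hc : 1 < c⟩ := ((hlim.eventually hU).and self_mem_nhdsWithin).exists
  refine ⟨c • x₀, hcU, ?_, ?_⟩
  · rw [rad_smul (by linarith), hx₀']
    exact lt_mul_of_one_lt_left hr₀ hc
  · have hdot : r₀ ^ 2 < (c • x₀) ⬝ᵥ x₀ := by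
      rw [smul_dotProduct, dotProduct_self_eq_rad_sq, hx₀', smul_eq_mul]
      exact lt_mul_of_one_lt_left (by positivity) hc
    have hcont : Continuous fun x : Vec => (c • x₀) ⬝ᵥ x := by fun_prop
    filter_upwards [self_mem_nhdsWithin, nhdsWithin_le_nhds
      (hcont.continuousAt.eventually_const_lt hdot)] with x hx hdotx
    exact openSegment_subset_lt_rad hr₀ hx hdotx

namespace AnalyticOnBdry

/-- Composing with the radial retraction onto the sphere glues the local extensions. -/
theorem of_locally {u : Vec → E} (hr₀ : 0 < r₀)
    (hu : ∀ x₀ ∈ bdry r₀, ∃ G : Vec → E, AnalyticAt ℝ G x₀ ∧ G =ᶠ[𝓝[bdry r₀] x₀] u) :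
    AnalyticOnBdry r₀ u := by
  have hfix : ∀ x ∈ bdry r₀, (r₀ / rad x) • x = x := fun x (hx : rad x = r₀) => by
    rw [hx, div_self hr₀.ne', one_smul]
  refine ⟨fun x => u ((r₀ / rad x) • x), fun x₀ hx₀ => ?_, fun x hx => congrArg u (hfix x hx)⟩
  obtain ⟨G, hG, hGu⟩ := hu x₀ hx₀
  have hpos : 0 < rad x₀ := hr₀.trans_eq (Eq.symm hx₀)
  have hretr : AnalyticAt ℝ (fun x : Vec => (r₀ / rad x) • x) x₀ :=
    (analyticAt_const.fun_div (analyticAt_rad hpos) hpos.ne').fun_smul analyticAt_id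
  have hlim : Tendsto (fun x : Vec => (r₀ / rad x) • x) (𝓝 x₀) (𝓝[bdry r₀] x₀) := by
    refine tendsto_nhdsWithin_iff.2 ⟨?_, ?_⟩
    · simpa only [hfix x₀ hx₀] using hretr.continuousAt.tendsto
    · filter_upwards [continuous_rad.continuousAt.eventually_const_lt hpos] with x hx
      change rad _ = r₀
      rw [rad_smul (by positivity), div_mul_cancel₀ _ hx.ne']
  exact (AnalyticAt.fun_comp (by rwa [hfix x₀ hx₀]) hretr).congr (hlim.eventually hGu)

theorem pi {u : Vec → Vec} (hu : ∀ i, AnalyticOnBdry r₀ fun x => u x i) : AnalyticOnBdry r₀ u := by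
  choose F hF hFu using hu
  exact ⟨fun x i => F i x, AnalyticOnNhd.pi hF, fun x hx => funext fun i => hFu i x hx⟩

theorem of_mem_analyticSpan {ι : Type*} [Fintype ι] {w : ι → Vec → ℝ} {u : Vec → ℝ}
    (hw : ∀ i, AnalyticOnBdry r₀ (w i)) (hu : u ∈ analyticSpan (bdry r₀) id (bdry r₀) w) :
    AnalyticOnBdry r₀ u := by
  choose F hF hFw using hw
  obtain ⟨a, ha, hau⟩ := hu
  refine ⟨fun x => ∑ i, a i x * F i x,
    Finset.analyticOnNhd_fun_sum _ fun i _ => (ha i).mul (hF i), fun x hx => ?_⟩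
  simp only [hau x hx, hFw _ x hx, id_eq]

theorem of_pd_mem_analyticSpan {ι : Type*} [Fintype ι] {V : Set Vec} {w : ι → Vec → ℝ}
    (hr₀ : 0 < r₀) (hV : IsOpen V) (hbdryV : bdry r₀ ⊆ V)
    (hw : ∀ i, ContDiff ℝ (⊤ : ℕ∞) (w i))
    (hclosed : ∀ k i, pd k (w i) ∈ analyticSpan V id (V ∩ {x | r₀ < rad x}) w) (i : ι) :
    AnalyticOnBdry r₀ (w i) := by
  have hΩ : IsOpen (V ∩ {x | r₀ < rad x}) := hV.inter (isOpen_lt continuous_const continuous_rad)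
  obtain ⟨A, hA, heq⟩ := exists_clm_system_of_pd_mem_analyticSpan
    (fun x _ i => (hw i).contDiffAt.differentiableAt (by simp))
    hclosed
  refine of_locally hr₀ fun x₀ hx₀ => ?_
  obtain ⟨ρ, hρ, hext⟩ := exists_analyticAt_eq_of_fderiv_eq_clm_apply hΩ
    (contDiff_pi.2 hw) (hA x₀ (hbdryV hx₀)) heq
  obtain ⟨ρ', hρ', hball⟩ := Metric.isOpen_iff.1 hV x₀ (hbdryV hx₀)
  have hnear : Metric.ball x₀ (min ρ ρ') ∈ 𝓝 x₀ := Metric.ball_mem_nhds x₀ (lt_min hρ hρ')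
  have hleft := Metric.ball_subset_ball (x := x₀) (min_le_left ρ ρ')
  have hright := (Metric.ball_subset_ball (x := x₀) (min_le_right ρ ρ')).trans hball
  obtain ⟨y₀, hy₀, hy₀r, hvisible⟩ := exists_eventually_openSegment_subset_lt_rad hr₀ hx₀ hnear
  obtain ⟨G, hG, hGw⟩ := hext y₀ ⟨hleft hy₀, hright hy₀, hy₀r⟩
  refine ⟨fun x => G x i, analyticAt_pi_iff.1 hG i, ?_⟩
  filter_upwards [hvisible, nhdsWithin_le_nhds hnear] with x hseg hx
  exact congrFun (hGw x (hleft hx) (Set.subset_inter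
    (((convex_ball x₀ _).openSegment_subset hy₀ hx).trans hright) hseg)) i

end AnalyticOnBdry

end Sphere

/-! ### Boundary regularity -/

section KIDs

variable {r₀ : ℝ} {V : Set Vec} {g p : Vec → Mtx} {f : Vec → ℝ} {X : Vec → Vec}

theorem analyticAt_nuV {x : Vec} (hg : ∀ i j, AnalyticAt ℝ (fun y => minv (g y) i j) x)
    (hpos : (Matrix.of (g x)).PosDef) (hx : x ≠ 0) (i : Fin 3) :
    AnalyticAt ℝ (fun y => nuV g y i) x := by
  have hnorm : 0 < ∑ i, ∑ j, minv (g x) i j * x i * x j := by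
    refine (hpos.inv.dotProduct_mulVec_pos hx).trans_eq ?_
    simp only [dotProduct, Matrix.mulVec, mul_sum, minv, star_trivial]
    exact sum_congr rfl fun i _ => sum_congr rfl fun j _ => by ring
  have hgrad : AnalyticAt ℝ (fun y => ∑ j, minv (g y) i j * y j) x :=
    Finset.analyticAt_fun_sum _ fun j _ => (hg i j).fun_mul (analyticAt_coord j x)
  have hnorm_sq : AnalyticAt ℝ (fun y => ∑ i, ∑ j, minv (g y) i j * y i * y j) x :=
    Finset.analyticAt_fun_sum _ fun i _ => Finset.analyticAt_fun_sum _ fun j _ =>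
      ((hg i j).fun_mul (analyticAt_coord i x)).fun_mul (analyticAt_coord j x)
  exact hgrad.fun_div (AnalyticAt.fun_comp (g := Real.sqrt)
    (f := fun y : Vec => ∑ i, ∑ j, minv (g y) i j * y i * y j)
    (Real.contDiffAt_sqrt hnorm.ne').analyticAt hnorm_sq) (Real.sqrt_pos.2 hnorm).ne'

theorem analyticOnNhd_nuV (hr₀ : 0 < r₀) (G : AnalyticMetricOn V g) (hbdryV : bdry r₀ ⊆ V)
    (hpos : ∀ x ∈ bdry r₀, (Matrix.of (g x)).PosDef) (i : Fin 3) :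
    AnalyticOnNhd ℝ (fun x => nuV g x i) (bdry r₀) := fun x hx => by
  refine analyticAt_nuV (fun i j => G.analyticOnNhd_minv i j x (hbdryV hx)) (hpos x hx) ?_ i
  rintro rfl
  exact hr₀.ne (by simpa [rad] using show rad 0 = r₀ from hx)

theorem dnu_mem_analyticSpan {Z : Set Vec} (hν : ∀ i, AnalyticOnNhd ℝ (fun x => nuV g x i) Z) :
    (fun x => dnu g f x) ∈ analyticSpan Z id Z (prolong (kidUnknowns g f X)) :=
  fun_sum_mem_analyticSpan fun k _ => mul_mem_analyticSpan (hν k)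
    (generator_mem_analyticSpan (w := prolong (kidUnknowns g f X)) (some k, none))

theorem covDnuX_mem_analyticSpan {Z : Set Vec} (G : AnalyticMetricOn V g) (hZV : Z ⊆ V)
    (hν : ∀ i, AnalyticOnNhd ℝ (fun x => nuV g x i) Z) (hg : ContDiff ℝ (⊤ : ℕ∞) g)
    (hf : ContDiff ℝ (⊤ : ℕ∞) f) (hX : ContDiff ℝ (⊤ : ℕ∞) X) (i : Fin 3) :
    (fun x => covDnuX g X x i) ∈ analyticSpan Z id Z (prolong (kidUnknowns g f X)) := by
  have hXmem : ∀ l, (fun x => X x l) ∈ analyticSpan V id V (kidUnknowns g f X) :=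
    G.mem_analyticSpan_kidUnknowns subset_rfl
  have hpd : ∀ k, pd k (fun x => X x i) ∈ analyticSpan V id V (prolong (kidUnknowns g f X)) :=
    pd_mem_analyticSpan_prolong G.isOpen subset_rfl
      (fun o => (contDiff_kidUnknowns hg hf hX o).contDiffOn) (hXmem i)
  have hcov : ∀ k, (fun x => pd k (fun y => X y i) x + ∑ l, Gam g i k l x * X x l)
      ∈ analyticSpan V id V (prolong (kidUnknowns g f X)) := fun k =>
    add_mem (hpd k) (fun_sum_mem_analyticSpan fun l _ =>
      mul_mem_analyticSpan (G.analyticOnNhd_Gam i k l) (analyticSpan_le_prolong (hXmem l)))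
  exact fun_sum_mem_analyticSpan fun k _ =>
    mul_mem_analyticSpan (hν k) (analyticSpan_mono hZV hZV (hcov k))

theorem KIDon.exists_isWeakKID {O : Set Vec} (hkid : KIDon g p r₀ (f, X) O) (hO : IsOpen O)
    (hObdry : bdry r₀ ⊆ O) (hg : ContDiff ℝ (⊤ : ℕ∞) g) (hsymm : ∀ x i j, g x i j = g x j i)
    (hpos : ∀ x ∈ bdry r₀, (Matrix.of (g x)).PosDef) (hag : AnalyticOnNhd ℝ g (bdry r₀))
    (hap : AnalyticOnNhd ℝ p (bdry r₀)) (hf : ContDiff ℝ (⊤ : ℕ∞) f)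
    (hX : ContDiff ℝ (⊤ : ℕ∞) X) :
    ∃ V, bdry r₀ ⊆ V ∧ IsWeakKID V (V ∩ {x | r₀ < rad x}) g p f X := by
  have hdet : Continuous fun x => (Matrix.of (g x)).det := hg.continuous.matrix_det
  let V : Set Vec :=
    O ∩ {x | AnalyticAt ℝ g x} ∩ {x | AnalyticAt ℝ p x} ∩ {x | 0 < (Matrix.of (g x)).det}
  have hV : IsOpen V :=
    ((hO.inter (isOpen_analyticAt ℝ g)).inter (isOpen_analyticAt ℝ p)).inter
      (isOpen_lt continuous_const hdet)
  refine ⟨V, fun x hx => ⟨⟨⟨hObdry hx, hag x hx⟩, hap x hx⟩, (hpos x hx).det_pos⟩, ?_⟩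
  exact
    { metric :=
        { isOpen := hV
          analytic := fun i j x hx => analyticAt_pi_iff.1 (analyticAt_pi_iff.1 hx.1.1.2 i) j
          symm := hsymm
          det_pos := fun x hx => hx.2 }
      analytic_p := fun i j x hx => analyticAt_pi_iff.1 (analyticAt_pi_iff.1 hx.1.2 i) j
      isOpen := hV.inter (isOpen_lt continuous_const continuous_rad)
      subset := Set.inter_subset_left
      contDiff_g := hg
      contDiff_f := hf
      contDiff_X := hX
      setIntegral_eq_zero := fun _ _ => hkid.setIntegral_eq_zero
        (Set.inter_subset_inter_left _ fun _ hx => hx.1.1.1) }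

theorem IsWeakKID.analyticOnBdry_prolong (hr₀ : 0 < r₀) (hbdryV : bdry r₀ ⊆ V)
    (K : IsWeakKID V (V ∩ {x | r₀ < rad x}) g p f X) :
    ∀ q, AnalyticOnBdry r₀ (prolong (kidUnknowns g f X) q) :=
  AnalyticOnBdry.of_pd_mem_analyticSpan hr₀ K.metric.isOpen hbdryV
    (fun q => contDiffOn_univ.1 (contDiffOn_prolong isOpen_univ (fun o => contDiffOn_univ.2
      (contDiff_kidUnknowns K.contDiff_g K.contDiff_f K.contDiff_X o)) q))
    K.pd_prolong_kidUnknowns_mem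

theorem KIDS_boundary_regularity_general (hr₀ : 0 < r₀) (hg : ContDiff ℝ (⊤ : ℕ∞) g)
    (hsymm : ∀ x i j, g x i j = g x j i) (hpos : ∀ x ∈ bdry r₀, (Matrix.of (g x)).PosDef)
    (hag : AnalyticOnNhd ℝ g (bdry r₀)) (hap : AnalyticOnNhd ℝ p (bdry r₀))
    (hf : ContDiff ℝ (⊤ : ℕ∞) f) (hX : ContDiff ℝ (⊤ : ℕ∞) X) {O : Set Vec} (hO : IsOpen O)
    (hObdry : bdry r₀ ⊆ O) (hkid : KIDon g p r₀ (f, X) O) :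
    AnalyticOnBdry r₀ f ∧ AnalyticOnBdry r₀ X ∧
      AnalyticOnBdry r₀ (fun x => dnu g f x) ∧
      AnalyticOnBdry r₀ (fun x => covDnuX g X x) := by
  obtain ⟨V, hbdryV, K⟩ := hkid.exists_isWeakKID hO hObdry hg hsymm hpos hag hap hf hX
  have hjet := K.analyticOnBdry_prolong hr₀ hbdryV
  have hν := analyticOnNhd_nuV hr₀ K.metric hbdryV hpos
  have hXmem : ∀ i, (fun x => X x i)
      ∈ analyticSpan (bdry r₀) id (bdry r₀) (prolong (kidUnknowns g f X)) := fun i =>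
    analyticSpan_mono hbdryV subset_rfl
      (analyticSpan_le_prolong (K.metric.mem_analyticSpan_kidUnknowns hbdryV i))
  exact ⟨hjet (none, none),
    AnalyticOnBdry.pi fun i => .of_mem_analyticSpan hjet (hXmem i),
    .of_mem_analyticSpan hjet (dnu_mem_analyticSpan hν),
    AnalyticOnBdry.pi fun i => .of_mem_analyticSpan hjet
      (covDnuX_mem_analyticSpan K.metric hbdryV hν hg hf hX i)⟩

end KIDs

/-- **Lemma 5.4.**  If `(Σ,ḡ,π̄)` is analytic near and at the boundary
and `DΦ[ḡ,π̄]^*(f,X) = 0` on a neighbourhood of `∂Σ` in `Σ`, then `f`, `X`, `∂_ν f` and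
`D_ν X` are analytic on `∂Σ`. -/
theorem KIDS_boundary_regularity
    (r₀ r₁ : ℝ) (hr₀ : 0 < r₀) (hr₁ : r₀ < r₁) (D : AFData r₀)
    (hanalytic_g : AnalyticOnNhd ℝ D.g {x | r₀ ≤ rad x ∧ rad x < r₁})
    (hanalytic_pi : AnalyticOnNhd ℝ D.pi {x | r₀ ≤ rad x ∧ rad x < r₁})
    (f : Vec → ℝ) (X : Vec → Vec)
    (hf : ContDiff ℝ (⊤ : ℕ∞) f) (hX : ContDiff ℝ (⊤ : ℕ∞) X)
    -- `DΦ[ḡ,π̄]^*(f,X) = 0` on a neighbourhood `O` of `∂Σ` in `Σ`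
    (O : Set Vec) (hO : IsOpen O) (hObdry : bdry r₀ ⊆ O)
    (hkid : KIDon D.g D.pi r₀ (f, X) O) :
    AnalyticOnBdry r₀ f ∧ AnalyticOnBdry r₀ X ∧
      AnalyticOnBdry r₀ (fun x => dnu D.g f x) ∧
      AnalyticOnBdry r₀ (fun x => covDnuX D.g X x) := by
  have hbdry : bdry r₀ ⊆ {x | r₀ ≤ rad x ∧ rad x < r₁} := fun x (hx : rad x = r₀) =>
    ⟨hx.ge, hx.trans_lt hr₁⟩
  exact KIDS_boundary_regularity_general hr₀ D.g_smooth D.g_symm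
    (fun x hx => D.g_posdef x (hbdry hx).1) (hanalytic_g.mono hbdry) (hanalytic_pi.mono hbdry)
    hf hX hO hObdry hkid
end
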